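/- arXiv:1205.6578 — 2 statements merged into one kernel-verified Lean document; each statement's English description precedes it below -/
import Mathlib

section
/- For each Dyck path λ of order n and each linear extension σ ∈ L(P_λ), the discrepancy of DTR(λ,σ) equals the number of descents of σ: dis(DTR(λ,σ)) = des(σ). -/
open Finset

noncomputable section

/-- A Dyck path of order `n`: a word of `2n` steps (`true` = up-step `(+1,+1)`,
`false` = down-step `(+1,-1)`) from `(-n,0)` to `(n,0)` staying weakly above the x-axis. -/
structure DyckPath (n : ℕ) where
  step : Fin (2 * n) → Bool
  balanced : (Finset.univ.filter fun i => step i = true).card = n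
  nonneg : ∀ k : ℕ, k ≤ 2 * n →
    (Finset.univ.filter fun i : Fin (2 * n) => (i : ℕ) < k ∧ step i = false).card ≤
      (Finset.univ.filter fun i : Fin (2 * n) => (i : ℕ) < k ∧ step i = true).card

namespace DyckPath

/-- Height of the path above column `x` (columns run from `-n` to `n`). -/
def ht {n : ℕ} (P : DyckPath n) (x : ℤ) : ℤ :=
  ((Finset.univ.filter fun i : Fin (2 * n) => ((i : ℕ) : ℤ) < x + n ∧ P.step i = true).card : ℤ) -
    ((Finset.univ.filter fun i : Fin (2 * n) => ((i : ℕ) : ℤ) < x + n ∧ P.step i = false).card : ℤ)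

/-- Height of the path at lattice point number `k`, `0 ≤ k ≤ 2n`
(point `k` lies at column `k - n`). -/
def pt {n : ℕ} (P : DyckPath n) (k : ℕ) : ℤ := P.ht ((k : ℤ) - n)

end DyckPath

/-- `IsChord P p q`: the up-step at (0-indexed) position `p` matches the down-step at
position `q`, forming a chord of `P`. -/
def IsChord {n : ℕ} (P : DyckPath n) (p q : ℕ) : Prop :=
  p < q ∧ q < 2 * n ∧
    (∃ hp : p < 2 * n, P.step ⟨p, hp⟩ = true) ∧
    (∃ hq : q < 2 * n, P.step ⟨q, hq⟩ = false) ∧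
    P.pt (q + 1) = P.pt p ∧
    ∀ m : ℕ, p < m → m ≤ q → P.pt p < P.pt m

/-- A natural labeling of the chord poset of `P`: the chord labeled `i` has its up-step at
(0-indexed) position `l i` and matching down-step at position `r i`; distinct labels name
distinct chords; and if one chord is nested inside another it receives a larger label. -/
structure ChordLabeling {n : ℕ} (P : DyckPath n) where
  l : Fin n → ℕ
  r : Fin n → ℕ
  chord : ∀ i, IsChord P (l i) (r i)
  inj : Function.Injective l
  natural : ∀ i j : Fin n, l j < l i → r i < r j → j < i

/-- The length of the chord labeled `i`: the number of up steps of `P` between and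
including its two endpoints. -/
def chordLen {n : ℕ} {P : DyckPath n} (C : ChordLabeling P) (i : Fin n) : ℕ :=
  (Finset.univ.filter fun m : Fin (2 * n) =>
    C.l i ≤ (m : ℕ) ∧ (m : ℕ) ≤ C.r i ∧ P.step m = true).card

/-- The growth sequence `p_1, …, p_n` associated with a natural chord labeling:
`p i = #{j<i : l j < l i} + #{j<i : r j < l i}`. -/
def seqOf {n : ℕ} {P : DyckPath n} (C : ChordLabeling P) (i : Fin n) : ℕ :=
  (Finset.univ.filter fun j : Fin n => j < i ∧ C.l j < C.l i).card +
    (Finset.univ.filter fun j : Fin n => j < i ∧ C.r j < C.l i).card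

/-- `σ` is the standardization of the word `w` (with distinct letters). -/
def IsStandardization {n : ℕ} (w : Fin n → ℕ) (σ : Equiv.Perm (Fin n)) : Prop :=
  ∀ i j : Fin n, σ i < σ j ↔ w i < w j

/-- `σ ∈ 𝓛(P_λ)`: σ is `L₀ ∘ L⁻¹` for some natural labeling `L` of the chord poset,
equivalently the standardization of the word of left endpoints of a natural labeling. -/
def LinExt {n : ℕ} (P : DyckPath n) (σ : Equiv.Perm (Fin n)) : Prop :=
  ∃ C : ChordLabeling P, IsStandardization C.l σ

/-- Successor index in `Fin n` (used only under the guard `i+1 < n`). -/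
def nextIdx {n : ℕ} (i : Fin n) : Fin n := ⟨((i : ℕ) + 1) % n, Nat.mod_lt _ i.pos⟩

/-- Descent set of a word: positions `i` with `i+1 < n` and `w i > w (i+1)`. -/
def descentFinset {n : ℕ} (w : Fin n → ℕ) : Finset (Fin n) :=
  Finset.univ.filter fun i => (i : ℕ) + 1 < n ∧ w (nextIdx i) < w i

/-- Number of inversions of a word. -/
def wordInv {n : ℕ} (w : Fin n → ℕ) : ℕ :=
  (Finset.univ.filter fun p : Fin n × Fin n => p.1 < p.2 ∧ w p.2 < w p.1).card

/-- The word of values of a permutation. -/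
def permWord {n : ℕ} (σ : Equiv.Perm (Fin n)) : Fin n → ℕ := fun i => (σ i : ℕ)

/-- inv(σ). -/
def permInv {n : ℕ} (σ : Equiv.Perm (Fin n)) : ℕ := wordInv (permWord σ)

/-- des(σ). -/
def permDes {n : ℕ} (σ : Equiv.Perm (Fin n)) : ℕ := (descentFinset (permWord σ)).card

/-- `REM_i(w) = {k > i : w i > w k > w (i+1)}`, the right embraced numbers. -/
def remSet {n : ℕ} (w : Fin n → ℕ) (i : Fin n) : Finset (Fin n) :=
  Finset.univ.filter fun k => i < k ∧ w (nextIdx i) < w k ∧ w k < w i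

/-- desdif(σ) = Σ_{i ∈ DES σ} (σ i − σ (i+1)). -/
def desdif {n : ℕ} (σ : Equiv.Perm (Fin n)) : ℕ :=
  ∑ i ∈ descentFinset (permWord σ), (permWord σ i - permWord σ (nextIdx i))

/-- res(σ) = Σ_{i ∈ DES σ} #{k < i : σ i > σ k > σ (i+1)}. -/
def resStat {n : ℕ} (σ : Equiv.Perm (Fin n)) : ℕ :=
  ∑ i ∈ descentFinset (permWord σ),
    (Finset.univ.filter fun k : Fin n =>
      k < i ∧ permWord σ (nextIdx i) < permWord σ k ∧ permWord σ k < permWord σ i).card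

/-- The Mahonian statistic mad(σ) = desdif(σ) + res(σ). -/
def mad {n : ℕ} (σ : Equiv.Perm (Fin n)) : ℕ := desdif σ + resStat σ

/-- σ avoids the pattern 231. -/
def Avoids231 {n : ℕ} (σ : Equiv.Perm (Fin n)) : Prop :=
  ¬∃ i j k : Fin n, i < j ∧ j < k ∧ σ k < σ i ∧ σ i < σ j

/-- The boxes of the skew shape `lam/mu` (with `mu` weakly above `lam`), each box
recorded by its bottom corner (a lattice point `(x, z)` with `z ≡ x + n (mod 2)`). -/
def skewCells {n : ℕ} (lam mu : DyckPath n) : Finset (ℤ × ℤ) :=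
  ((Finset.Icc (-(n : ℤ)) n) ×ˢ (Finset.Icc (0 : ℤ) n)).filter fun c =>
    lam.ht c.1 ≤ c.2 ∧ c.2 + 2 ≤ mu.ht c.1 ∧ (c.2 - c.1 - n) % 2 = 0

/-- A Dyck tile, recorded by the set of bottom corners of its boxes: these form
a Dyck-path shape, i.e. a ±1-step lattice path whose two ends are lowest. -/
def IsDyckTile (t : Finset (ℤ × ℤ)) : Prop :=
  ∃ (a b : ℤ) (f : ℤ → ℤ), a ≤ b ∧
    (∀ x : ℤ, a ≤ x → x < b → f (x + 1) = f x + 1 ∨ f (x + 1) = f x - 1) ∧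
    f b = f a ∧ (∀ x : ℤ, a ≤ x → x ≤ b → f a ≤ f x) ∧
    t = (Finset.Icc a b).image fun x => (x, f x)

/-- A Dyck tiling of order `n`: a tiling of the skew shape between two Dyck paths of
order `n` by Dyck tiles. -/
structure DyckTiling (n : ℕ) where
  lower : DyckPath n
  upper : DyckPath n
  below : ∀ x : ℤ, lower.ht x ≤ upper.ht x
  tiles : Finset (Finset (ℤ × ℤ))
  isDyck : ∀ t ∈ tiles, IsDyckTile t
  disj : ∀ t ∈ tiles, ∀ u ∈ tiles, t ≠ u → Disjoint t u
  cover : tiles.biUnion id = skewCells lower upper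

namespace DyckTiling

/-- Number of boxes of the skew shape. -/
def area {n : ℕ} (T : DyckTiling n) : ℕ := (skewCells T.lower T.upper).card

/-- Number of tiles. -/
def numTiles {n : ℕ} (T : DyckTiling n) : ℕ := T.tiles.card

/-- art(T) = (area(T) + tiles(T)) / 2. -/
def art {n : ℕ} (T : DyckTiling n) : ℕ := (T.area + T.numTiles) / 2

/-- dis(T): the number of step positions where the lower path steps down while the
upper path steps up. -/
def dis {n : ℕ} (T : DyckTiling n) : ℕ :=
  (Finset.univ.filter fun i : Fin (2 * n) =>
    T.lower.step i = false ∧ T.upper.step i = true).card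

/-- Cover-inclusiveness: whenever a tile has a box strictly above a box of another tile,
its horizontal extent is contained in that of the other tile. -/
def CoverInclusive {n : ℕ} (T : DyckTiling n) : Prop :=
  ∀ t ∈ T.tiles, ∀ u ∈ T.tiles,
    (∃ p ∈ t, ∃ q ∈ u, (p : ℤ × ℤ).1 = (q : ℤ × ℤ).1 ∧ (q : ℤ × ℤ).2 < (p : ℤ × ℤ).2) →
    ∀ p ∈ t, ∃ y : ℤ, ((p : ℤ × ℤ).1, y) ∈ u

end DyckTiling

/-- Height function of the spread at column `s` of a Dyck path. -/
def spreadHt {n : ℕ} (P : DyckPath n) (s x : ℤ) : ℤ :=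
  if x < s then P.ht (x + 1) else if x = s then P.ht s + 1 else P.ht (x - 1)

/-- Spread of a tile at column `s`: points left of `s` move left, points right of `s`
move right, and a point at column `s` is duplicated upward. -/
def spreadTile (s : ℤ) (t : Finset (ℤ × ℤ)) : Finset (ℤ × ℤ) :=
  ((t.filter fun p => p.1 ≤ s).image fun p => (p.1 - 1, p.2)) ∪
    ((t.filter fun p => p.1 = s).image fun p => (p.1, p.2 + 1)) ∪
    ((t.filter fun p => s ≤ p.1).image fun p => (p.1 + 1, p.2))

/-- Spread of a set of tiles at column `s`. -/
def spreadTiles (s : ℤ) (ts : Finset (Finset (ℤ × ℤ))) : Finset (Finset (ℤ × ℤ)) :=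
  ts.image (spreadTile s)

/-- Column `c` is eligible for a tiling with upper-boundary height function `h` and
tile set `ts`: the upper boundary has an up step ending at column `c`, and its point at
column `c` is not the top corner of a one-box tile. -/
def EligibleCol (h : ℤ → ℤ) (ts : Finset (Finset (ℤ × ℤ))) (c : ℤ) : Prop :=
  h c = h (c - 1) + 1 ∧ ({(c, h c - 2)} : Finset (ℤ × ℤ)) ∉ ts

/-- `T'` is the result of the strip-grow map applied to `(T, s)`: spread `T` at `s` and
add a one-box tile on each up step of the (spread) upper boundary starting at a column
`≥ s` (i.e. strictly to the right of column `s`). -/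
def StripGrowRel {n : ℕ} (T : DyckTiling n) (s : ℤ) (T' : DyckTiling (n + 1)) : Prop :=
  (∀ x : ℤ, T'.lower.ht x = spreadHt T.lower s x) ∧
  (∀ x : ℤ, T'.upper.ht x =
    if s ≤ x ∧ spreadHt T.upper s (x + 1) = spreadHt T.upper s x + 1 then
      spreadHt T.upper s x + 2
    else spreadHt T.upper s x) ∧
  T'.tiles = spreadTiles s T.tiles ∪
    ((Finset.Icc s (n : ℤ)).filter fun x =>
        spreadHt T.upper s (x + 1) = spreadHt T.upper s x + 1).image
      (fun x => ({(x, spreadHt T.upper s x)} : Finset (ℤ × ℤ)))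

/-- `T'` is the result of the ribbon-grow map applied to `(T, s)`: spread `T` at `s`,
and if the special column `Q` of the spread tiling is strictly right of `s`, add a
ribbon of one-box tiles at all columns strictly between `s` and `Q`. -/
def RibbonGrowRel {n : ℕ} (T : DyckTiling n) (s : ℤ) (T' : DyckTiling (n + 1)) : Prop :=
  (∀ x : ℤ, T'.lower.ht x = spreadHt T.lower s x) ∧
  ∃ Q : ℤ,
    EligibleCol (spreadHt T.upper s) (spreadTiles s T.tiles) Q ∧
    (∀ c : ℤ, EligibleCol (spreadHt T.upper s) (spreadTiles s T.tiles) c → c ≤ Q) ∧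
    (∀ x : ℤ, T'.upper.ht x =
      if s < x ∧ x < Q then spreadHt T.upper s x + 2 else spreadHt T.upper s x) ∧
    T'.tiles = spreadTiles s T.tiles ∪
      (Finset.Ioo s Q).image (fun x => ({(x, spreadHt T.upper s x)} : Finset (ℤ × ℤ)))

/-- `s` is the special column of `T`: its rightmost eligible column. -/
def SpecialCol {n : ℕ} (T : DyckTiling n) (s : ℤ) : Prop :=
  EligibleCol T.upper.ht T.tiles s ∧ ∀ c : ℤ, EligibleCol T.upper.ht T.tiles c → c ≤ s

/-- In the strip-shrink map applied to `T'` with special column `s`, a one-box tile is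
removed at column `x`: `x` is right of `s` and there is a one-box tile there that is
part of an up step of the upper boundary. -/
def StripRemovedAt {n : ℕ} (T' : DyckTiling n) (s x : ℤ) : Prop :=
  s < x ∧ T'.upper.ht x = T'.upper.ht (x - 1) + 1 ∧
    ({(x, T'.upper.ht x - 2)} : Finset (ℤ × ℤ)) ∈ T'.tiles

instance {n : ℕ} (T' : DyckTiling n) (s x : ℤ) : Decidable (StripRemovedAt T' s x) := by
  unfold StripRemovedAt; infer_instance

/-- `(T, s)` is the result of the strip-shrink map applied to `T'`: `s` is the special
column of `T'`; all one-box tiles right of `s` lying on up steps of the upper boundary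
are removed; and the result is the spread of `T` at `s`. -/
def StripShrinkRel {n : ℕ} (T' : DyckTiling (n + 1)) (T : DyckTiling n) (s : ℤ) : Prop :=
  SpecialCol T' s ∧
  (∀ x : ℤ, spreadHt T.lower s x = T'.lower.ht x) ∧
  (∀ x : ℤ, spreadHt T.upper s x =
    if StripRemovedAt T' s x then T'.upper.ht x - 2 else T'.upper.ht x) ∧
  spreadTiles s T.tiles =
    T'.tiles \ (((Finset.Ioc s ((n : ℤ) + 1)).filter fun x => StripRemovedAt T' s x).image
      fun x => ({(x, T'.upper.ht x - 2)} : Finset (ℤ × ℤ)))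

/-- `(T, s)` is the result of the ribbon-shrink map applied to `T'`: `s` is the special
column of `T'`; the maximal run of topmost one-box tiles in columns `s+1, s+2, …` is
removed; and the result is the spread of `T` at `s`. -/
def RibbonShrinkRel {n : ℕ} (T' : DyckTiling (n + 1)) (T : DyckTiling n) (s : ℤ) : Prop :=
  SpecialCol T' s ∧
  ∃ r : ℤ, s < r ∧
    (∀ x : ℤ, s < x → x < r → ({(x, T'.upper.ht x - 2)} : Finset (ℤ × ℤ)) ∈ T'.tiles) ∧
    ({(r, T'.upper.ht r - 2)} : Finset (ℤ × ℤ)) ∉ T'.tiles ∧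
    (∀ x : ℤ, spreadHt T.lower s x = T'.lower.ht x) ∧
    (∀ x : ℤ, spreadHt T.upper s x =
      if s < x ∧ x < r then T'.upper.ht x - 2 else T'.upper.ht x) ∧
    spreadTiles s T.tiles =
      T'.tiles \ ((Finset.Ioo s r).image fun x => ({(x, T'.upper.ht x - 2)} : Finset (ℤ × ℤ)))

/-- `IsDTS n p T`: `T` is the Dyck tiling `DTS(p_1, …, p_n)` (indices 0-based, so the
growth column for step `i` is `p i - i`). -/
inductive IsDTS : (n : ℕ) → (Fin n → ℕ) → DyckTiling n → Prop where
  | nil (p : Fin 0 → ℕ) (T : DyckTiling 0) : IsDTS 0 p T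
  | cons (n : ℕ) (p : Fin (n + 1) → ℕ) (T : DyckTiling n) (T' : DyckTiling (n + 1)) :
      IsDTS n (fun i => p i.castSucc) T →
      StripGrowRel T ((p (Fin.last n) : ℤ) - n) T' → IsDTS (n + 1) p T'

/-- `IsDTR n p T`: `T` is the Dyck tiling `DTR(p_1, …, p_n)`. -/
inductive IsDTR : (n : ℕ) → (Fin n → ℕ) → DyckTiling n → Prop where
  | nil (p : Fin 0 → ℕ) (T : DyckTiling 0) : IsDTR 0 p T
  | cons (n : ℕ) (p : Fin (n + 1) → ℕ) (T : DyckTiling n) (T' : DyckTiling (n + 1)) :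
      IsDTR n (fun i => p i.castSucc) T →
      RibbonGrowRel T ((p (Fin.last n) : ℤ) - n) T' → IsDTR (n + 1) p T'

/-- `T = DTS(λ, σ)`. -/
def IsDTSof {n : ℕ} (lam : DyckPath n) (σ : Equiv.Perm (Fin n)) (T : DyckTiling n) : Prop :=
  ∃ C : ChordLabeling lam, IsStandardization C.l σ ∧ IsDTS n (seqOf C) T

/-- `T = DTR(λ, σ)`. -/
def IsDTRof {n : ℕ} (lam : DyckPath n) (σ : Equiv.Perm (Fin n)) (T : DyckTiling n) : Prop :=
  ∃ C : ChordLabeling lam, IsStandardization C.l σ ∧ IsDTR n (seqOf C) T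

/-- Increment `a` if it exceeds `p`. -/
def bump (p a : ℕ) : ℕ := if p < a then a + 1 else a

/-- The perfect matching `match(p_1, …, p_n)` of `{1, …, 2n}`. -/
def matchSeq : (n : ℕ) → (Fin n → ℕ) → Finset (ℕ × ℕ)
  | 0, _ => ∅
  | n + 1, p =>
    ((matchSeq n fun i => p i.castSucc).image fun q =>
      (bump (p (Fin.last n)) q.1, bump (p (Fin.last n)) q.2)) ∪
      {(p (Fin.last n) + 1, 2 * (n + 1))}

/-- The number of nestings of a matching: pairs `(a,b)`, `(c,d)` with `c < a < b < d`. -/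
def nestings (M : Finset (ℕ × ℕ)) : ℕ :=
  ((M ×ˢ M).filter fun q => q.2.1 < q.1.1 ∧ q.1.1 < q.1.2 ∧ q.1.2 < q.2.2).card

/-- `w` is the min-word of `M`: the list of the smaller elements of the pairs of `M`,
sorted by the larger elements. -/
def IsMinWord (n : ℕ) (M : Finset (ℕ × ℕ)) (w : Fin n → ℕ) : Prop :=
  ∃ b : Fin n → ℕ, StrictMono b ∧ (∀ i, w i < b i) ∧
    M = Finset.univ.image fun i => (w i, b i)

/-- The number of tiles of `T` containing boxes over both endpoint columns of the
chord with endpoints at step positions `p < q`. -/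
def chordTileCount {n : ℕ} (T : DyckTiling n) (p q : ℕ) : ℕ :=
  (T.tiles.filter fun t =>
    (∃ c ∈ t, (c : ℤ × ℤ).1 = (p : ℤ) + 1 - n) ∧ (∃ c ∈ t, (c : ℤ × ℤ).1 = (q : ℤ) - n)).card

/-- A Dyck tableau of order `n` over the zigzag path `Z` of order `n+1`: a skew shape
`Z/μ` with `n` dots, one in each column of the skew shape through a valley of `Z`. -/
structure DyckTableau (n : ℕ) (Z : DyckPath (n + 1)) where
  upper : DyckPath (n + 1)
  below : ∀ x : ℤ, Z.ht x ≤ upper.ht x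
  dots : Finset (ℤ × ℤ)
  sub : dots ⊆ skewCells Z upper
  card_dots : dots.card = n
  valley : ∀ x : ℤ, Z.ht (x - 1) = Z.ht x + 1 → Z.ht (x + 1) = Z.ht x + 1 →
    (dots.filter fun c => c.1 = x).card = 1

/-- The `q`-integer `[m]_q = 1 + q + ⋯ + q^(m-1)` as a polynomial. -/
def qint (m : ℕ) : Polynomial ℤ := ∑ i ∈ Finset.range m, Polynomial.X ^ i

/-- The `q`-factorial `[n]_q!`. -/
def qfact (n : ℕ) : Polynomial ℤ := ∏ i ∈ Finset.range n, qint (i + 1)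

namespace DyckPath

lemma ht_succ_eq {n : ℕ} (P : DyckPath n) (i : Fin (2 * n)) :
    P.ht ((i : ℤ) + 1 - n) = P.ht ((i : ℤ) - n) + if P.step i = true then 1 else -1 := by
  have key : ∀ b : Bool,
      ((univ.filter fun j : Fin (2 * n) =>
        ((j : ℕ) : ℤ) < (i : ℤ) + 1 - n + n ∧ P.step j = b).card : ℤ) =
      ((univ.filter fun j : Fin (2 * n) =>
        ((j : ℕ) : ℤ) < (i : ℤ) - n + n ∧ P.step j = b).card : ℤ) +
        if P.step i = b then 1 else 0 := by
    intro b
    split_ifs with hb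
    · have : (univ.filter fun j : Fin (2 * n) =>
          ((j : ℕ) : ℤ) < (i : ℤ) + 1 - n + n ∧ P.step j = b) =
          insert i (univ.filter fun j : Fin (2 * n) =>
            ((j : ℕ) : ℤ) < (i : ℤ) - n + n ∧ P.step j = b) := by
        ext j
        simp only [mem_filter, mem_univ, true_and, mem_insert]
        constructor
        · rintro ⟨h1, h2⟩
          by_cases hji : j = i
          · exact Or.inl hji
          · have : (j : ℕ) ≠ i := fun h => hji (Fin.ext h)
            exact Or.inr ⟨by omega, h2⟩
        · rintro (rfl | ⟨h1, h2⟩)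
          · exact ⟨by omega, hb⟩
          · exact ⟨by omega, h2⟩
      rw [this, card_insert_of_notMem (by simp)]
      push_cast
      rfl
    · rw [add_zero]
      congr 2
      ext j
      simp only [mem_filter, mem_univ, true_and]
      refine and_congr_left fun h2 => ?_
      have : (j : ℕ) ≠ i := fun h => hb (by rw [← Fin.ext h]; exact h2)
      omega
  unfold ht
  rw [key true, key false]
  cases P.step i <;> simp <;> ring

lemma step_eq_true_iff {n : ℕ} (P : DyckPath n) (i : Fin (2 * n)) :
    P.step i = true ↔ P.ht ((i : ℤ) + 1 - n) = P.ht ((i : ℤ) - n) + 1 := by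
  rw [ht_succ_eq]
  cases P.step i <;> simp

lemma step_eq_false_iff {n : ℕ} (P : DyckPath n) (i : Fin (2 * n)) :
    P.step i = false ↔ P.ht ((i : ℤ) + 1 - n) = P.ht ((i : ℤ) - n) - 1 := by
  rw [ht_succ_eq]
  cases P.step i <;> simp <;> omega

end DyckPath

/-- Columns at which the lower path has just stepped down and the upper path has just
stepped up. -/
def DyckTiling.disCols {n : ℕ} (T : DyckTiling n) : Finset ℤ :=
  (Finset.Ioc (-(n : ℤ)) n).filter fun c =>
    T.lower.ht c = T.lower.ht (c - 1) - 1 ∧ T.upper.ht c = T.upper.ht (c - 1) + 1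

lemma DyckTiling.dis_eq_card_disCols {n : ℕ} (T : DyckTiling n) : T.dis = T.disCols.card := by
  unfold DyckTiling.dis
  refine card_bij (fun i _ => (i : ℤ) + 1 - n) ?_ ?_ ?_
  · intro i hi
    simp only [mem_filter, mem_univ, true_and, DyckPath.step_eq_true_iff,
      DyckPath.step_eq_false_iff] at hi
    have := i.isLt
    have e : (i : ℤ) + 1 - n - 1 = i - n := by ring
    simp only [disCols, mem_filter, mem_Ioc, e]
    exact ⟨by omega, hi⟩
  · intro i _ j _ h
    exact Fin.ext (by simpa using h)
  · intro c hc
    simp only [disCols, mem_filter, mem_Ioc] at hc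
    obtain ⟨k, hk⟩ := Int.eq_ofNat_of_zero_le (a := c + n - 1) (by omega)
    have hc' : c = (k : ℤ) + 1 - n := by omega
    subst hc'
    have e : (k : ℤ) + 1 - n - 1 = k - n := by ring
    rw [e] at hc
    refine ⟨⟨k, by omega⟩, ?_, rfl⟩
    simpa only [mem_filter, mem_univ, true_and, DyckPath.step_eq_true_iff,
      DyckPath.step_eq_false_iff] using hc.2

lemma DyckTiling.nonempty_of_mem_tiles {n : ℕ} (T : DyckTiling n) {t : Finset (ℤ × ℤ)}
    (ht : t ∈ T.tiles) : t.Nonempty := by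
  obtain ⟨a, b, f, hab, -, -, -, rfl⟩ := T.isDyck t ht
  simpa using hab

lemma mem_spreadTile {s : ℤ} {t : Finset (ℤ × ℤ)} {c z : ℤ} :
    (c, z) ∈ spreadTile s t ↔
      (c + 1 ≤ s ∧ (c + 1, z) ∈ t) ∨ (c = s ∧ (c, z - 1) ∈ t) ∨
        (s ≤ c - 1 ∧ (c - 1, z) ∈ t) := by
  simp only [spreadTile, mem_union, mem_image, mem_filter, Prod.exists, Prod.mk.injEq, or_assoc]
  refine or_congr ?_ (or_congr ?_ ?_)
  · constructor
    · rintro ⟨a, b, ⟨h, h'⟩, rfl, rfl⟩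
      simpa using ⟨h', h⟩
    · rintro ⟨h, h'⟩
      exact ⟨_, _, ⟨h', h⟩, by ring, rfl⟩
  · constructor
    · rintro ⟨a, b, ⟨h, h'⟩, rfl, rfl⟩
      simpa using ⟨h', h⟩
    · rintro ⟨h, h'⟩
      exact ⟨_, _, ⟨h', h⟩, rfl, by ring⟩
  · constructor
    · rintro ⟨a, b, ⟨h, h'⟩, rfl, rfl⟩
      simpa using ⟨h', h⟩
    · rintro ⟨h, h'⟩
      exact ⟨_, _, ⟨h', h⟩, by ring, rfl⟩

lemma singleton_notMem_spreadTiles (s z : ℤ) (ts : Finset (Finset (ℤ × ℤ))) :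
    ({(s, z)} : Finset (ℤ × ℤ)) ∉ spreadTiles s ts := by
  simp only [spreadTiles, mem_image, not_exists, not_and]
  intro t _ h
  have h1 : (s, z) ∈ spreadTile s t := by simp [h]
  rcases mem_spreadTile.1 h1 with ⟨h2, -⟩ | ⟨-, h2⟩ | ⟨h2, -⟩
  · omega
  · have h3 : (s + 1, z - 1) ∈ spreadTile s t :=
      mem_spreadTile.2 (Or.inr (Or.inr ⟨by omega, by simpa using h2⟩))
    simp [h] at h3
  · omega

lemma singleton_mem_spreadTiles_iff {n : ℕ} (T : DyckTiling n) {s c z : ℤ} (hc : s + 1 < c) :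
    ({(c, z)} : Finset (ℤ × ℤ)) ∈ spreadTiles s T.tiles ↔
      ({(c - 1, z)} : Finset (ℤ × ℤ)) ∈ T.tiles := by
  simp only [spreadTiles, mem_image]
  constructor
  · rintro ⟨t, ht, h⟩
    suffices t = {(c - 1, z)} by rwa [← this]
    refine (T.nonempty_of_mem_tiles ht).subset_singleton_iff.1 ?_
    rintro ⟨a, b⟩ hab
    rcases le_or_gt a s with has | has
    · have h3 : (a - 1, b) ∈ spreadTile s t :=
        mem_spreadTile.2 (Or.inl ⟨by omega, by simpa using hab⟩)
      simp only [h, mem_singleton, Prod.mk.injEq] at h3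
      omega
    · have h3 : (a + 1, b) ∈ spreadTile s t :=
        mem_spreadTile.2 (Or.inr (Or.inr ⟨by omega, by simpa using hab⟩))
      simp only [h, mem_singleton, Prod.mk.injEq] at h3 ⊢
      omega
  · intro h
    refine ⟨_, h, ?_⟩
    ext ⟨a, b⟩
    simp only [mem_spreadTile, mem_singleton, Prod.mk.injEq]
    omega

lemma eligibleCol_spread_self {n : ℕ} (T : DyckTiling n) (s : ℤ) :
    EligibleCol (spreadHt T.upper s) (spreadTiles s T.tiles) s :=
  ⟨by simp [spreadHt], singleton_notMem_spreadTiles _ _ _⟩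

/-- Right of the spread column, the eligible columns of the spread tiling are the eligible
columns of the original tiling, shifted by one. -/
lemma eligibleCol_spread_iff {n : ℕ} (T : DyckTiling n) {s c : ℤ} (hc : s < c) :
    EligibleCol (spreadHt T.upper s) (spreadTiles s T.tiles) c ↔
      s < c - 1 ∧ EligibleCol T.upper.ht T.tiles (c - 1) := by
  rcases eq_or_lt_of_le (Int.add_one_le_iff.2 hc) with rfl | hc'
  · simp [EligibleCol, spreadHt]
    omega
  · have e1 : spreadHt T.upper s c = T.upper.ht (c - 1) := by
      rw [spreadHt, if_neg (by omega), if_neg (by omega)]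
    have e2 : spreadHt T.upper s (c - 1) = T.upper.ht (c - 1 - 1) := by
      rw [spreadHt, if_neg (by omega), if_neg (by omega)]
    simp only [EligibleCol, e1, e2, singleton_mem_spreadTiles_iff T hc']
    exact ⟨fun h => ⟨by omega, h⟩, fun h => h.2⟩

/-- The special column after a ribbon-grow step is the column at which the step was made. -/
lemma RibbonGrowRel.specialCol {n : ℕ} {T : DyckTiling n} {s : ℤ} {T' : DyckTiling (n + 1)}
    (h : RibbonGrowRel T s T') : SpecialCol T' s := by
  obtain ⟨-, Q, hQ, hmax, hup, htiles⟩ := h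
  have hsQ := hmax s (eligibleCol_spread_self T s)
  obtain ⟨hs1, hs2⟩ := eligibleCol_spread_self T s
  refine ⟨⟨?_, ?_⟩, ?_⟩
  · rw [hup, hup, if_neg (by omega), if_neg (by omega), hs1]
  · rw [hup, if_neg (by omega), htiles, mem_union, not_or]
    refine ⟨hs2, ?_⟩
    simp only [mem_image, mem_Ioo, singleton_inj, Prod.mk.injEq, not_exists, not_and]
    omega
  · rintro c ⟨hc1, hc2⟩
    by_contra! hsc
    rw [htiles, mem_union, not_or] at hc2
    rcases lt_trichotomy c Q with hcQ | rfl | hcQ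
    · apply hc2.2
      rw [hup, if_pos ⟨hsc, hcQ⟩]
      exact mem_image.2 ⟨c, mem_Ioo.2 ⟨hsc, hcQ⟩, by simp⟩
    · have hlt := ((eligibleCol_spread_iff T hsc).1 hQ).1
      have h1 := hQ.1
      rw [hup, hup, if_neg (by omega), if_pos (by omega)] at hc1
      omega
    · rw [hup, if_neg (by omega)] at hc1 hc2
      rw [hup, if_neg (by omega)] at hc1
      have := hmax c ⟨hc1, hc2.1⟩
      omega

lemma RibbonGrowRel.lower_up {n : ℕ} {T : DyckTiling n} {s : ℤ} {T' : DyckTiling (n + 1)}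
    (h : RibbonGrowRel T s T') : T'.lower.ht s = T'.lower.ht (s - 1) + 1 := by
  rw [h.1, h.1]
  simp [spreadHt]

/-- The discrepancy grows by one exactly when a nonempty ribbon is added, that is, when some
eligible column lies right of the growth column. -/
lemma RibbonGrowRel.dis_eq {n : ℕ} {T : DyckTiling n} {s : ℤ} {T' : DyckTiling (n + 1)}
    (h : RibbonGrowRel T s T') (hs : -(n : ℤ) ≤ s) (hs' : s ≤ n)
    (hlow : ∀ c, SpecialCol T c → T.lower.ht c = T.lower.ht (c - 1) + 1) (d : Prop) [Decidable d]
    (hd : d ↔ ∃ c, s < c ∧ EligibleCol T.upper.ht T.tiles c) :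
    T'.dis = T.dis + if d then 1 else 0 := by
  obtain ⟨hlo, Q, hQ, hmax, hup, -⟩ := h
  have hsQ := hmax s (eligibleCol_spread_self T s)
  have hdQ : d ↔ s < Q := by
    rw [hd]
    constructor
    · rintro ⟨c, hc, hce⟩
      have := hmax (c + 1) ((eligibleCol_spread_iff T (by omega)).2 (by simpa using ⟨hc, hce⟩))
      omega
    · intro hlt
      exact ⟨_, (eligibleCol_spread_iff T hlt).1 hQ⟩
  have hQ2 : s < Q → s + 1 < Q := fun hlt => by
    have := ((eligibleCol_spread_iff T hlt).1 hQ).1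
    omega
  have hQlow : s < Q → T.lower.ht (Q - 1) = T.lower.ht (Q - 1 - 1) + 1 := fun hlt => by
    obtain ⟨h1, h2⟩ := (eligibleCol_spread_iff T hlt).1 hQ
    refine hlow _ ⟨h2, fun c hc => ?_⟩
    by_contra! hlt'
    have := hmax (c + 1) ((eligibleCol_spread_iff T (by omega)).2
      ⟨by omega, by simpa using hc⟩)
    omega
  have sub : ∀ (P : DyckPath n) (c : ℤ), c < s →
      spreadHt P s c = P.ht (c + 1) ∧ spreadHt P s (c - 1) = P.ht (c + 1 - 1) := fun P c hc => by
    simp [spreadHt, hc, show c - 1 < s by omega]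
  have sup : ∀ (P : DyckPath n) (c : ℤ), s + 1 < c →
      spreadHt P s c = P.ht (c - 1) ∧ spreadHt P s (c - 1) = P.ht (c - 1 - 1) := fun P c hc => by
    simp only [spreadHt]
    rw [if_neg (by omega), if_neg (by omega), if_neg (by omega), if_neg (by omega)]
    exact ⟨rfl, rfl⟩
  let g : ℤ → ℤ := fun c => if c ≤ s then c - 1 else c + 1
  have hg : Function.Injective g := fun a b hab => by
    simp only [g] at hab
    split_ifs at hab <;> omega
  have hcols : T'.disCols = T.disCols.image g ∪ if d then {s + 1} else ∅ := by
    ext c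
    have hmem : c ∈ T.disCols.image g ↔
        (c < s ∧ c + 1 ∈ T.disCols) ∨ (s + 1 < c ∧ c - 1 ∈ T.disCols) := by
      simp only [mem_image, g]
      constructor
      · rintro ⟨a, ha, rfl⟩
        split_ifs with has
        · exact Or.inl ⟨by omega, by simpa using ha⟩
        · exact Or.inr ⟨by omega, by simpa using ha⟩
      · rintro (⟨h1, h2⟩ | ⟨h1, h2⟩)
        · exact ⟨_, h2, by rw [if_pos (by omega)]; ring⟩
        · exact ⟨_, h2, by rw [if_neg (by omega)]; ring⟩
    have hmem' : (c ∈ if d then ({s + 1} : Finset ℤ) else ∅) ↔ s < Q ∧ c = s + 1 := by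
      split_ifs with hd' <;> simp [← hdQ, hd']
    rw [mem_union, hmem, hmem']
    simp only [DyckTiling.disCols, mem_filter, mem_Ioc, hlo, hup]
    push_cast
    rcases lt_trichotomy c s with hc | rfl | hc
    · obtain ⟨a1, a2⟩ := sub T.lower c hc
      obtain ⟨a3, a4⟩ := sub T.upper c hc
      rw [a1, a2, a3, a4, if_neg (by omega), if_neg (by omega)]
      omega
    · have a1 : spreadHt T.lower c c = spreadHt T.lower c (c - 1) + 1 := by simp [spreadHt]
      omega
    · rcases eq_or_lt_of_le (Int.add_one_le_iff.2 hc) with rfl | hc'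
      · have a1 : spreadHt T.lower s (s + 1) = spreadHt T.lower s (s + 1 - 1) - 1 := by
          simp [spreadHt]
        have a2 : spreadHt T.upper s (s + 1) = spreadHt T.upper s (s + 1 - 1) - 1 := by
          simp [spreadHt]
        rw [if_neg (c := s < s + 1 - 1 ∧ _) (by omega)]
        split_ifs <;> omega
      · obtain ⟨a1, a2⟩ := sup T.lower c hc'
        obtain ⟨a3, a4⟩ := sup T.upper c hc'
        rcases lt_trichotomy c Q with hcQ | rfl | hcQ
        · rw [a1, a2, a3, a4, if_pos (by omega), if_pos (by omega)]
          omega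
        · have b1 := hQlow hc
          rw [a1, a2]
          omega
        · rw [a1, a2, a3, a4, if_neg (by omega), if_neg (by omega)]
          omega
  have hdisj : Disjoint (T.disCols.image g) (if d then {s + 1} else ∅) := by
    split_ifs
    · simp only [disjoint_singleton_right, mem_image, g, not_exists, not_and]
      intro a _
      split_ifs <;> omega
    · simp
  rw [T'.dis_eq_card_disCols, T.dis_eq_card_disCols, hcols, card_union_of_disjoint hdisj,
    card_image_of_injective _ hg]
  split_ifs <;> simp

lemma not_eligibleCol_zero (T : DyckTiling 0) (c : ℤ) : ¬ EligibleCol T.upper.ht T.tiles c := by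
  simp [EligibleCol, DyckPath.ht]

/-- The discrepancy of `DTR(p)` counts the weak descents of `p`; its special column is the
last growth column, where the lower path has an up step. -/
lemma IsDTR.dis_eq {n : ℕ} {p : Fin n → ℕ} {T : DyckTiling n} (h : IsDTR n p T) :
    ∀ q : ℕ → ℕ, (∀ i : Fin n, p i = q i) → (∀ i < n, q i ≤ 2 * i) →
      T.dis = ((range (n - 1)).filter fun k => q (k + 1) ≤ q k).card ∧
      ∀ m, n = m + 1 → SpecialCol T ((q m : ℤ) - m) ∧
        T.lower.ht ((q m : ℤ) - m) = T.lower.ht ((q m : ℤ) - m - 1) + 1 := by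
  induction h with
  | nil p T => exact fun q _ _ => ⟨by simp [DyckTiling.dis], by omega⟩
  | cons n p T T' _ hgrow ih =>
    intro q hq hbound
    obtain ⟨ihdis, ihspec⟩ := ih q (fun i => by simpa using hq i.castSucc)
      (fun i hi => hbound i (by omega))
    have hlast : p (Fin.last n) = q n := by simpa using hq (Fin.last n)
    rw [hlast] at hgrow
    have hqn := hbound n (by omega)
    refine ⟨?_, ?_⟩
    · rcases n with - | m
      · have := hgrow.dis_eq (by omega) (by omega)
          (fun c hc => absurd hc.1 (not_eligibleCol_zero T c)) False
          (by simp [not_eligibleCol_zero])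
        simpa [ihdis] using this
      · obtain ⟨hspec, hup⟩ := ihspec m rfl
        have hd : q (m + 1) ≤ q m ↔
            ∃ c, (q (m + 1) : ℤ) - (m + 1 : ℕ) < c ∧ EligibleCol T.upper.ht T.tiles c := by
          constructor
          · intro hle
            exact ⟨_, by push_cast; omega, hspec.1⟩
          · rintro ⟨c, hc, hce⟩
            have := hspec.2 c hce
            push_cast at hc
            omega
        have := hgrow.dis_eq (by omega) (by omega)
          (fun c hc => by rwa [le_antisymm (hspec.2 c hc.1) (hc.2 _ hspec.1)])
          (q (m + 1) ≤ q m) hd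
        rw [this, ihdis]
        simp only [Nat.add_sub_cancel, range_add_one, filter_insert]
        split_ifs <;> simp
    · rintro m hm
      obtain rfl : n = m := by omega
      exact ⟨hgrow.specialCol, hgrow.lower_up⟩

lemma seqOf_le {n : ℕ} {P : DyckPath n} (C : ChordLabeling P) (i : Fin n) :
    seqOf C i ≤ 2 * i := by
  have key : ∀ (f : Fin n → Prop) [DecidablePred f],
      (univ.filter fun j : Fin n => j < i ∧ f j).card ≤ i := fun f _ =>
    calc _ ≤ (Finset.Iio i).card := card_le_card fun j => by simp +contextual
      _ = i := by simp
  have h1 := key fun j => C.l j < C.l i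
  have h2 := key fun j => C.r j < C.l i
  unfold seqOf
  omega

/-- Weak descents of the growth sequence are the descents of the word of left endpoints. -/
lemma seqOf_le_seqOf_iff {n : ℕ} {P : DyckPath n} (C : ChordLabeling P) {i j : Fin n}
    (hij : (j : ℕ) = i + 1) : seqOf C j ≤ seqOf C i ↔ C.l j < C.l i := by
  have hlr := (C.chord i).1
  have hlt : i < j := Fin.lt_def.2 (by omega)
  have cases_lt : ∀ k : Fin n, k < j → k ≠ i → k < i := fun k hk hki => by
    have : (k : ℕ) ≠ i := fun h => hki (Fin.ext h)
    rw [Fin.lt_def] at *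
    omega
  unfold seqOf
  constructor
  · contrapose!
    intro hle
    have hl : C.l i < C.l j := lt_of_le_of_ne hle fun h => hlt.ne (C.inj h)
    refine add_lt_add_of_lt_of_le (card_lt_card ?_) (card_le_card ?_)
    · refine ssubset_iff_of_subset (fun k => ?_) |>.2 ⟨i, by simp [hlt, hl], by simp⟩
      simp only [mem_filter, mem_univ, true_and]
      exact fun h => ⟨h.1.trans hlt, h.2.trans hl⟩
    · intro k
      simp only [mem_filter, mem_univ, true_and]
      exact fun h => ⟨h.1.trans hlt, h.2.trans hl⟩
  · intro hl
    refine add_le_add (card_le_card ?_) (card_le_card ?_) <;> intro k <;>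
      simp only [mem_filter, mem_univ, true_and] <;> rintro ⟨h1, h2⟩ <;>
      refine ⟨cases_lt k h1 ?_, h2.trans hl⟩ <;> rintro rfl <;> omega

lemma card_descentFinset {n : ℕ} (w : Fin n → ℕ) (q : ℕ → ℕ)
    (h : ∀ i j : Fin n, (j : ℕ) = i + 1 → (q j ≤ q i ↔ w j < w i)) :
    (descentFinset w).card = ((range (n - 1)).filter fun k => q (k + 1) ≤ q k).card := by
  have hnext : ∀ i : Fin n, (i : ℕ) + 1 < n → (nextIdx i : ℕ) = i + 1 := fun i hi => by
    simp [nextIdx, Nat.mod_eq_of_lt hi]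
  refine card_bij (fun i _ => (i : ℕ)) ?_ (fun i _ j _ => Fin.ext) ?_
  · intro i hi
    simp only [descentFinset, mem_filter, mem_univ, true_and] at hi
    have := (h i (nextIdx i) (hnext i hi.1)).2 hi.2
    rw [hnext i hi.1] at this
    simp only [mem_filter, mem_range]
    exact ⟨by omega, this⟩
  · intro k hk
    simp only [mem_filter, mem_range] at hk
    refine ⟨⟨k, by omega⟩, ?_, rfl⟩
    have hk1 : k + 1 < n := by omega
    simp only [descentFinset, mem_filter, mem_univ, true_and]
    refine ⟨hk1, (h _ _ (hnext ⟨k, by omega⟩ hk1)).1 ?_⟩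
    rw [hnext ⟨k, by omega⟩ hk1]
    exact hk.2

/-- For each Dyck path `λ` of order `n` and each linear extension
`σ ∈ 𝓛(P_λ)`, `dis(DTR(λ,σ)) = des(σ)`. -/
theorem dis_DTR_eq_des (n : ℕ) (lam : DyckPath n) (σ : Equiv.Perm (Fin n))
    (hσ : LinExt lam σ) (T : DyckTiling n) (hT : IsDTRof lam σ T) :
    T.dis = permDes σ := by
  obtain ⟨C, hC, hDTR⟩ := hT
  let q : ℕ → ℕ := fun k => if hk : k < n then seqOf C ⟨k, hk⟩ else 0
  have hq : ∀ i : Fin n, seqOf C i = q i := fun i => by simp [q]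
  have hdis := (hDTR.dis_eq q hq fun i hi => by
    simpa only [hq] using seqOf_le C ⟨i, hi⟩).1
  rw [hdis, permDes, card_descentFinset _ q]
  intro i j hij
  rw [← hq, ← hq, seqOf_le_seqOf_iff C hij, ← hC j i, permWord, permWord, Fin.lt_def]

end
end

section
/- There is a bijection between the cover-inclusive Dyck tilings whose lower path is the zigzag path zigzag_n = (UD)^n and the Dyck tableaux of order n. -/
open Finset

noncomputable section

/-! ### Height functions of Dyck paths -/

/-- Height profile of an arbitrary word of `2n` up and down steps. -/
def wordHt {n : ℕ} (s : Fin (2 * n) → Bool) (x : ℤ) : ℤ :=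
  ((univ.filter fun i : Fin (2 * n) => ((i : ℕ) : ℤ) < x + n ∧ s i = true).card : ℤ) -
    ((univ.filter fun i : Fin (2 * n) => ((i : ℕ) : ℤ) < x + n ∧ s i = false).card : ℤ)

lemma wordHt_eq_sum {n : ℕ} (s : Fin (2 * n) → Bool) (x : ℤ) :
    wordHt s x = ∑ i : Fin (2 * n),
      if ((i : ℕ) : ℤ) < x + n then (if s i = true then (1 : ℤ) else -1) else 0 := by
  unfold wordHt
  rw [Finset.card_filter, Finset.card_filter]
  push_cast
  rw [← Finset.sum_sub_distrib]
  refine Finset.sum_congr rfl fun i _ => ?_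
  cases s i <;> by_cases h : ((i : ℕ) : ℤ) < x + n <;> simp [h]

lemma wordHt_succ {n : ℕ} (s : Fin (2 * n) → Bool) (x : ℤ) (i : Fin (2 * n))
    (hi : ((i : ℕ) : ℤ) = x + n) :
    wordHt s (x + 1) = wordHt s x + if s i = true then 1 else -1 := by
  rw [wordHt_eq_sum, wordHt_eq_sum, ← sub_eq_iff_eq_add', ← Finset.sum_sub_distrib,
    Finset.sum_eq_single i]
  · have h1 : ((i : ℕ) : ℤ) < x + 1 + n := by omega
    have h2 : ¬((i : ℕ) : ℤ) < x + n := by omega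
    rw [if_pos h1, if_neg h2, sub_zero]
  · intro j _ hj
    have : (j : ℕ) ≠ i := fun h => hj (Fin.ext h)
    by_cases h : ((j : ℕ) : ℤ) < x + n
    · rw [if_pos (by omega), if_pos h, sub_self]
    · rw [if_neg (by omega), if_neg h, sub_self]
  · simp

lemma wordHt_of_le {n : ℕ} (s : Fin (2 * n) → Bool) (x : ℤ) (hx : x ≤ -n) :
    wordHt s x = 0 := by
  rw [wordHt_eq_sum]
  exact Finset.sum_eq_zero fun i _ => if_neg (by omega)

/-- A word is recovered from a `±1`-step function as its height profile. -/
lemma wordHt_decide {n : ℕ} (f : ℤ → ℤ) (h0 : f (-n) = 0)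
    (hstep : ∀ x : ℤ, -n ≤ x → x < n → f (x + 1) = f x + 1 ∨ f (x + 1) = f x - 1)
    (x : ℤ) (hx : -(n : ℤ) ≤ x) (hx' : x ≤ n) :
    wordHt (fun i : Fin (2 * n) =>
      decide (f (((i : ℕ) : ℤ) - n + 1) = f (((i : ℕ) : ℤ) - n) + 1)) x = f x := by
  induction x, hx using Int.leInduction with
  | base => rw [wordHt_of_le _ _ le_rfl, h0]
  | succ x hx ih =>
    rw [wordHt_succ _ x ⟨(x + n).toNat, by omega⟩ (by simp; omega), ih (by omega)]
    have e : (((x + n).toNat : ℕ) : ℤ) - n = x := by omega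
    simp only [e, decide_eq_true_eq]
    have := hstep x hx (by omega)
    split_ifs <;> omega

namespace DyckPath

variable {n : ℕ} (P : DyckPath n)

lemma ht_eq_wordHt (x : ℤ) : P.ht x = wordHt P.step x := rfl

lemma ht_of_le (x : ℤ) (hx : x ≤ -n) : P.ht x = 0 := wordHt_of_le _ _ hx

lemma ht_succ (x : ℤ) (hx : -n ≤ x) (hx' : x < n) :
    P.ht (x + 1) = P.ht x + 1 ∨ P.ht (x + 1) = P.ht x - 1 := by
  have h := wordHt_succ P.step x ⟨(x + n).toNat, by omega⟩ (by simp; omega)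
  rw [ht_eq_wordHt, ht_eq_wordHt, h]
  split_ifs <;> omega

lemma ht_of_ge (x : ℤ) (hx : n ≤ x) : P.ht x = 0 := by
  have h1 := P.balanced
  have h2 := Finset.card_filter_add_card_filter_not (s := (univ : Finset (Fin (2 * n))))
    (fun i => P.step i = true)
  have e : ∀ b : Bool, (univ.filter fun i : Fin (2 * n) =>
      ((i : ℕ) : ℤ) < x + n ∧ P.step i = b) = univ.filter fun i => P.step i = b := by
    intro b
    refine Finset.filter_congr fun i _ => and_iff_right (by omega)
  simp only [Bool.not_eq_true, Finset.card_univ, Fintype.card_fin] at h2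
  unfold ht
  rw [e, e]
  omega

lemma ht_nonneg (x : ℤ) : 0 ≤ P.ht x := by
  rcases le_or_gt x (-n) with h | h
  · rw [P.ht_of_le x h]
  rcases le_or_gt (n : ℤ) x with h' | h'
  · rw [P.ht_of_ge x h']
  have := P.nonneg (x + n).toNat (by omega)
  have e : ∀ i : ℕ, i < (x + n).toNat ↔ (i : ℤ) < x + n := by omega
  simp only [e] at this
  unfold ht
  omega

lemma ht_parity (x : ℤ) (hx : -n ≤ x) (hx' : x ≤ n) : (P.ht x - x - n) % 2 = 0 := by
  induction x, hx using Int.leInduction with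
  | base => rw [P.ht_of_le _ le_rfl]; omega
  | succ x hx ih =>
    have := P.ht_succ x hx (by omega)
    have := ih (by omega)
    omega

lemma ht_le_add (x : ℤ) (hx : -n ≤ x) (hx' : x ≤ n) : P.ht x ≤ x + n := by
  induction x, hx using Int.leInduction with
  | base => rw [P.ht_of_le _ le_rfl]; omega
  | succ x hx ih =>
    have := P.ht_succ x hx (by omega)
    have := ih (by omega)
    omega

lemma ht_le_sub (x : ℤ) (hx : -n ≤ x) (hx' : x ≤ n) : P.ht x ≤ n - x := by
  induction x, hx' using Int.leInductionDown with
  | base => rw [P.ht_of_ge _ le_rfl]; omega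
  | pred x hx' ih =>
    have := P.ht_succ (x - 1) hx (by omega)
    rw [sub_add_cancel] at this
    have := ih (by omega)
    omega

lemma ext_step {P Q : DyckPath n} (h : P.step = Q.step) : P = Q := by
  cases P; cases Q; cases h; rfl

lemma ext_ht {P Q : DyckPath n} (h : ∀ x : ℤ, -n ≤ x → x ≤ n → P.ht x = Q.ht x) : P = Q := by
  refine ext_step (funext fun i => ?_)
  have hP := wordHt_succ P.step ((i : ℕ) - n) i (by omega)
  have hQ := wordHt_succ Q.step ((i : ℕ) - n) i (by omega)
  rw [← ht_eq_wordHt, ← ht_eq_wordHt, h _ (by omega) (by omega), h _ (by omega) (by omega)] at hP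
  rw [← ht_eq_wordHt, ← ht_eq_wordHt] at hQ
  have := hP.symm.trans hQ
  cases hp : P.step i <;> cases hq : Q.step i <;> simp [hp, hq] at this ⊢

/-- A nonnegative `±1`-step function on `[-n, n]` vanishing at both ends is the height
function of a Dyck path. -/
lemma exists_ht_eq (f : ℤ → ℤ) (h0 : f (-n) = 0) (h1 : f n = 0)
    (hstep : ∀ x : ℤ, -n ≤ x → x < n → f (x + 1) = f x + 1 ∨ f (x + 1) = f x - 1)
    (hpos : ∀ x : ℤ, -n ≤ x → x ≤ n → 0 ≤ f x) :
    ∃ P : DyckPath n, ∀ x : ℤ, -n ≤ x → x ≤ n → P.ht x = f x := by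
  have key := wordHt_decide f h0 hstep
  set s : Fin (2 * n) → Bool := fun i =>
    decide (f (((i : ℕ) : ℤ) - n + 1) = f (((i : ℕ) : ℤ) - n) + 1)
  refine ⟨⟨s, ?_, ?_⟩, key⟩
  · have hn := key n (by omega) le_rfl
    have h2 := Finset.card_filter_add_card_filter_not (s := (univ : Finset (Fin (2 * n))))
      (fun i => s i = true)
    have e : ∀ b : Bool, (univ.filter fun i : Fin (2 * n) =>
        ((i : ℕ) : ℤ) < (n : ℤ) + n ∧ s i = b) = univ.filter fun i => s i = b := by
      intro b
      refine Finset.filter_congr fun i _ => and_iff_right (by omega)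
    simp only [Bool.not_eq_true, Finset.card_univ, Fintype.card_fin] at h2
    unfold wordHt at hn
    rw [e, e] at hn
    omega
  · intro k hk
    have hn := key (k - n) (by omega) (by omega)
    have := hpos (k - n) (by omega) (by omega)
    unfold wordHt at hn
    simp only [sub_add_cancel, Nat.cast_lt] at hn
    omega

/-- Height function of the zigzag path. -/
lemma ht_zigzag {Z : DyckPath n} (hZ : ∀ i : Fin (2 * n), Z.step i = decide ((i : ℕ) % 2 = 0))
    (x : ℤ) (hx : -n ≤ x) (hx' : x ≤ n) : Z.ht x = (x + n) % 2 := by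
  induction x, hx using Int.leInduction with
  | base => rw [Z.ht_of_le _ le_rfl]; omega
  | succ x hx ih =>
    have h := wordHt_succ Z.step x ⟨(x + n).toNat, by omega⟩ (by simp; omega)
    rw [ht_eq_wordHt, h, ← ht_eq_wordHt, ih (by omega), hZ]
    simp only [decide_eq_true_eq]
    split_ifs <;> omega

end DyckPath

lemma mem_skewCells_zigzag {n : ℕ} {Z : DyckPath n}
    (hZ : ∀ i : Fin (2 * n), Z.step i = decide ((i : ℕ) % 2 = 0)) (P : DyckPath n) (x z : ℤ) :
    (x, z) ∈ skewCells Z P ↔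
      -n ≤ x ∧ x ≤ n ∧ (x + n) % 2 ≤ z ∧ z + 2 ≤ P.ht x ∧ (z - x - n) % 2 = 0 := by
  simp only [skewCells, mem_filter, mem_product, mem_Icc]
  constructor
  · rintro ⟨⟨⟨h1, h2⟩, h3, h4⟩, h5, h6, h7⟩
    rw [DyckPath.ht_zigzag hZ x h1 h2] at h5
    exact ⟨h1, h2, h5, h6, h7⟩
  · rintro ⟨h1, h2, h5, h6, h7⟩
    have := P.ht_le_add x h1 h2
    have := P.ht_le_sub x h1 h2
    rw [DyckPath.ht_zigzag hZ x h1 h2]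
    omega

/-! ### Marked paths -/

/-- A Dyck path together with, for each peak column `x` of the zigzag path of the same
order, a number `mark x` between `0` and the number of boxes in that column between the
two paths. -/
structure MarkedPath (n : ℕ) where
  path : DyckPath n
  mark : ℤ → ℤ
  mark_off : ∀ x : ℤ, ¬(-n ≤ x ∧ x ≤ n ∧ (x + n) % 2 = 1) → mark x = 0
  mark_nonneg : ∀ x : ℤ, 0 ≤ mark x
  mark_le : ∀ x : ℤ, -n ≤ x → x ≤ n → (x + n) % 2 = 1 → 2 * mark x + 1 ≤ path.ht x

lemma MarkedPath.ext_mark {n : ℕ} {M N : MarkedPath n} (h : M.path = N.path)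
    (hm : ∀ x : ℤ, -n ≤ x → x ≤ n → (x + n) % 2 = 1 → M.mark x = N.mark x) : M = N := by
  have : M.mark = N.mark := by
    funext x
    by_cases hx : -n ≤ x ∧ x ≤ n ∧ (x + n) % 2 = 1
    · exact hm x hx.1 hx.2.1 hx.2.2
    · rw [M.mark_off x hx, N.mark_off x hx]
  cases M; cases N; cases h; cases this; rfl

/-! ### From marked paths to tilings -/

/-- Columns `x` and `y` belong to the same tile at height `m` over the zigzag path: all peak
columns between them carry a mark reaching above height `m`. -/
def Linked (n : ℕ) (c : ℤ → ℤ) (m x y : ℤ) : Prop :=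
  x = y ∨ ∀ w : ℤ, (x ≤ w ∧ w ≤ y ∨ y ≤ w ∧ w ≤ x) → (w + n) % 2 = 1 → m < 2 * c w

lemma Linked.symm {n : ℕ} {c : ℤ → ℤ} {m x y : ℤ} (h : Linked n c m x y) :
    Linked n c m y x :=
  h.imp Eq.symm fun h w hw => h w hw.symm

lemma Linked.trans {n : ℕ} {c : ℤ → ℤ} {m x y z : ℤ} (h : Linked n c m x y)
    (h' : Linked n c m y z) : Linked n c m x z := by
  rcases h with rfl | h
  · exact h'
  rcases h' with rfl | h'
  · exact Or.inr h
  refine Or.inr fun w hw hp => ?_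
  by_cases hxy : x ≤ w ∧ w ≤ y ∨ y ≤ w ∧ w ≤ x
  · exact h w hxy hp
  · exact h' w (by omega) hp

lemma Linked.mono {n : ℕ} {c : ℤ → ℤ} {m m' x y : ℤ} (hm : m' ≤ m) (h : Linked n c m x y) :
    Linked n c m' x y :=
  h.imp id fun h w hw hp => hm.trans_lt (h w hw hp)

/-- Height of a box over the zigzag path. -/
def layer (n : ℕ) (p : ℤ × ℤ) : ℤ := p.2 - (p.1 + n) % 2

namespace MarkedPath

variable {n : ℕ} {Z : DyckPath n}

open Classical in
/-- The tile containing the box `p`. -/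
def tileOf (M : MarkedPath n) (Z : DyckPath n) (p : ℤ × ℤ) : Finset (ℤ × ℤ) :=
  (skewCells Z M.path).filter fun q =>
    layer n q = layer n p ∧ Linked n M.mark (layer n p) p.1 q.1

lemma mem_tileOf (M : MarkedPath n) (p q : ℤ × ℤ) : q ∈ M.tileOf Z p ↔
    q ∈ skewCells Z M.path ∧ layer n q = layer n p ∧ Linked n M.mark (layer n p) p.1 q.1 := by
  simp [tileOf]

lemma self_mem_tileOf (M : MarkedPath n) {p : ℤ × ℤ} (hp : p ∈ skewCells Z M.path) :
    p ∈ M.tileOf Z p :=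
  (M.mem_tileOf p p).2 ⟨hp, rfl, Or.inl rfl⟩

lemma tileOf_eq (M : MarkedPath n) {p q : ℤ × ℤ} (h : q ∈ M.tileOf Z p) :
    M.tileOf Z q = M.tileOf Z p := by
  obtain ⟨-, h1, h2⟩ := (M.mem_tileOf p q).1 h
  ext r
  rw [mem_tileOf, mem_tileOf, h1]
  exact and_congr_right fun _ => and_congr_right fun _ =>
    ⟨fun h => h2.trans h, fun h => h2.symm.trans h⟩

/-- Boxes next to a peak column marked above height `m` belong to the shape. -/
lemma mem_skewCells_of_lt_mark (hZ : ∀ i : Fin (2 * n), Z.step i = decide ((i : ℕ) % 2 = 0))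
    (M : MarkedPath n) {m w y : ℤ} (hm : 0 ≤ m) (hm2 : m % 2 = 0) (hw : -n ≤ w) (hw' : w ≤ n)
    (hp : (w + n) % 2 = 1) (hc : m < 2 * M.mark w) (hy : w - 1 ≤ y) (hy' : y ≤ w + 1) :
    (y, m + (y + n) % 2) ∈ skewCells Z M.path := by
  rw [mem_skewCells_zigzag hZ]
  have h1 := M.mark_le w hw hw' hp
  have h2 := M.path.ht_succ w hw (by omega)
  have h3 := M.path.ht_succ (w - 1) (by omega) (by omega)
  rw [sub_add_cancel] at h3
  obtain rfl | rfl | rfl : y = w - 1 ∨ y = w ∨ y = w + 1 := by omega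
  all_goals omega

lemma isDyckTile_tileOf (hZ : ∀ i : Fin (2 * n), Z.step i = decide ((i : ℕ) % 2 = 0))
    (M : MarkedPath n) {p : ℤ × ℤ} (hp : p ∈ skewCells Z M.path) :
    IsDyckTile (M.tileOf Z p) := by
  obtain ⟨x, z⟩ := p
  have hself := M.self_mem_tileOf hp
  have hp' := (mem_skewCells_zigzag hZ _ _ _).1 hp
  set m := layer n (x, z) with hm
  have hz : z = m + (x + n) % 2 := by simp [hm, layer]
  have hm0 : 0 ≤ m := by omega
  have hm2 : m % 2 = 0 := by omega
  set K := (M.tileOf Z (x, z)).image Prod.fst with hK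
  have hKne : K.Nonempty := ⟨x, mem_image.2 ⟨_, hself, rfl⟩⟩
  have memK : ∀ y, y ∈ K ↔ (y, m + (y + n) % 2) ∈ skewCells Z M.path ∧
      Linked n M.mark m x y := by
    intro y
    simp only [hK, mem_image, mem_tileOf]
    constructor
    · rintro ⟨⟨y', z'⟩, ⟨h1, h2, h3⟩, rfl⟩
      have : z' = m + (y' + n) % 2 := by simp only [layer] at h2 hm; omega
      exact ⟨this ▸ h1, h3⟩
    · rintro ⟨h1, h2⟩
      exact ⟨_, ⟨h1, by simp only [layer] at hm ⊢; omega, h2⟩, rfl⟩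
  have memT : ∀ q, q ∈ M.tileOf Z (x, z) ↔ q.1 ∈ K ∧ q.2 = m + (q.1 + n) % 2 := by
    rintro ⟨y, u⟩
    rw [memK, mem_tileOf, ← hm]
    have e : layer n (y, u) = m ↔ u = m + (y + n) % 2 := by simp only [layer]; omega
    rw [e]
    constructor
    · rintro ⟨h1, h2, h3⟩
      exact ⟨⟨h2 ▸ h1, h3⟩, h2⟩
    · rintro ⟨⟨h1, h2⟩, h3⟩
      simp only at h3
      exact ⟨h3 ▸ h1, h3, h2⟩
  obtain ⟨a, ha⟩ : ∃ a, a = K.min' hKne := ⟨_, rfl⟩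
  obtain ⟨b, hb⟩ : ∃ b, b = K.max' hKne := ⟨_, rfl⟩
  have haK : a ∈ K := ha ▸ K.min'_mem hKne
  have hbK : b ∈ K := hb ▸ K.max'_mem hKne
  have hmin : ∀ y ∈ K, a ≤ y := fun y hy => ha ▸ K.min'_le y hy
  have hmax : ∀ y ∈ K, y ≤ b := fun y hy => hb ▸ K.le_max' y hy
  have hra := (mem_skewCells_zigzag hZ _ _ _).1 ((memK a).1 haK).1
  have hrb := (mem_skewCells_zigzag hZ _ _ _).1 ((memK b).1 hbK).1
  have hab : a ≤ b := hmin b hbK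
  have hxa := ((memK a).1 haK).2
  have hlink : a < b → ∀ w, a ≤ w → w ≤ b → (w + n) % 2 = 1 → m < 2 * M.mark w := by
    intro hlt w hw hw' hp
    rcases hxa.symm.trans ((memK b).1 hbK).2 with h | h
    · omega
    · exact h w (Or.inl ⟨hw, hw'⟩) hp
  have hclose : ∀ w y, a < b → a ≤ w → w ≤ b → (w + n) % 2 = 1 → w - 1 ≤ y → y ≤ w + 1 →
      y ∈ K := by
    intro w y hlt hw hw' hp hy hy'
    refine (memK y).2 ⟨mem_skewCells_of_lt_mark hZ M hm0 hm2 (by omega) (by omega) hp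
      (hlink hlt w hw hw' hp) hy hy', hxa.trans (Or.inr fun v hv hvp => ?_)⟩
    exact hlink hlt v (by omega) (by omega) hvp
  have hKI : ∀ y, y ∈ K ↔ a ≤ y ∧ y ≤ b := by
    refine fun y => ⟨fun h => ⟨hmin y h, hmax y h⟩, fun h => ?_⟩
    rcases hab.eq_or_lt with e | hlt
    · obtain rfl : y = a := by omega
      exact haK
    by_cases hy : (y + n) % 2 = 1
    · exact hclose y y hlt h.1 h.2 hy (by omega) (by omega)
    · by_cases hyb : y = b
      · exact hyb ▸ hbK
      · exact hclose (y + 1) y hlt (by omega) (by omega) (by omega) (by omega) (by omega)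
  have hend : a < b → (a + n) % 2 = 0 ∧ (b + n) % 2 = 0 := by
    intro hlt
    constructor
    · by_contra h
      have := hmin _ (hclose a (a - 1) hlt (by omega) (by omega) (by omega) (by omega) (by omega))
      omega
    · by_contra h
      have := hmax _ (hclose b (b + 1) hlt (by omega) (by omega) (by omega) (by omega) (by omega))
      omega
  refine ⟨a, b, fun y => m + (y + n) % 2, hab, ?_, ?_, ?_, ?_⟩
  · intro y _ _
    simp only
    omega
  · simp only
    rcases hab.eq_or_lt with rfl | hlt
    · rfl
    · have := hend hlt
      omega
  · intro y hy hy'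
    simp only
    rcases hab.eq_or_lt with e | hlt
    · obtain rfl : y = a := by omega
      rfl
    · have := hend hlt
      omega
  · ext ⟨y, u⟩
    simp only [memT, hKI, mem_image, mem_Icc, Prod.mk.injEq]
    constructor
    · rintro ⟨h, rfl⟩
      exact ⟨y, h, rfl, rfl⟩
    · rintro ⟨_, h, rfl, rfl⟩
      exact ⟨h, rfl⟩

/-- The Dyck tiling encoded by a marked path. -/
def toTiling (hZ : ∀ i : Fin (2 * n), Z.step i = decide ((i : ℕ) % 2 = 0))
    (M : MarkedPath n) : DyckTiling n where
  lower := Z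
  upper := M.path
  below x := by
    have := M.path.ht_nonneg x
    rcases le_or_gt x (-n) with h | h
    · rwa [Z.ht_of_le x h]
    rcases le_or_gt (n : ℤ) x with h' | h'
    · rwa [Z.ht_of_ge x h']
    have := M.path.ht_parity x h.le h'.le
    rw [DyckPath.ht_zigzag hZ x h.le h'.le]
    omega
  tiles := (skewCells Z M.path).image (M.tileOf Z)
  isDyck t ht := by
    obtain ⟨p, hp, rfl⟩ := mem_image.1 ht
    exact isDyckTile_tileOf hZ M hp
  disj t ht u hu hne := by
    obtain ⟨p, hp, rfl⟩ := mem_image.1 ht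
    obtain ⟨q, hq, rfl⟩ := mem_image.1 hu
    refine Finset.disjoint_left.2 fun r hr hr' => hne ?_
    rw [← M.tileOf_eq hr, ← M.tileOf_eq hr']
  cover := by
    ext p
    simp only [mem_biUnion, mem_image, id]
    constructor
    · rintro ⟨_, ⟨q, hq, rfl⟩, h⟩
      exact ((M.mem_tileOf q p).1 h).1
    · intro hp
      exact ⟨_, ⟨p, hp, rfl⟩, M.self_mem_tileOf hp⟩

lemma toTiling_coverInclusive (hZ : ∀ i : Fin (2 * n), Z.step i = decide ((i : ℕ) % 2 = 0))
    (M : MarkedPath n) : (M.toTiling hZ).CoverInclusive := by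
  rintro t ht u hu ⟨⟨x, z⟩, hp, ⟨x', z'⟩, hq, hx, hz⟩ ⟨y, v⟩ hr
  obtain ⟨p, -, rfl⟩ := mem_image.1 ht
  obtain ⟨q, -, rfl⟩ := mem_image.1 hu
  rw [← M.tileOf_eq hp, mem_tileOf] at hr
  obtain ⟨hr1, hr2, hr3⟩ := hr
  have hq1 := ((M.mem_tileOf _ _).1 hq).1
  rw [← M.tileOf_eq hq]
  simp only at hx hz hr3
  subst hx
  simp only [layer] at hr2 hr3
  rw [mem_skewCells_zigzag hZ] at hr1 hq1
  refine ⟨z' - (x + n) % 2 + (y + n) % 2, (M.mem_tileOf _ _).2 ⟨?_, ?_, ?_⟩⟩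
  · rw [mem_skewCells_zigzag hZ]
    simp only
    omega
  · simp [layer]
  · exact hr3.mono (by simp only [layer]; omega)

/-- A peak column is marked up to its lowest one-box tile. -/
lemma singleton_mem_toTiling_iff (hZ : ∀ i : Fin (2 * n), Z.step i = decide ((i : ℕ) % 2 = 0))
    (M : MarkedPath n) {w m : ℤ} (hp : (w + n) % 2 = 1)
    (hcell : (w, m + 1) ∈ skewCells Z M.path) :
    {(w, m + 1)} ∈ (M.toTiling hZ).tiles ↔ 2 * M.mark w ≤ m := by
  have hl : layer n (w, m + 1) = m := by simp only [layer]; omega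
  have hc := (mem_skewCells_zigzag hZ _ _ _).1 hcell
  constructor
  · intro h
    obtain ⟨q, -, hq⟩ := mem_image.1 h
    have hmem : (w, m + 1) ∈ M.tileOf Z q := hq ▸ mem_singleton_self _
    rw [← M.tileOf_eq hmem] at hq
    by_contra! hlt
    have := mem_skewCells_of_lt_mark hZ M (m := m) (w := w) (y := w + 1) (by omega) (by omega)
      hc.1 hc.2.1 hp hlt (by omega) le_rfl
    have : (w + 1, m + (w + 1 + n) % 2) ∈ M.tileOf Z (w, m + 1) := by
      refine (M.mem_tileOf _ _).2 ⟨this, by simp only [layer]; omega, Or.inr fun v hv hv' => ?_⟩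
      obtain rfl : v = w := by simp only at hv; omega
      omega
    rw [hq, mem_singleton, Prod.mk.injEq] at this
    omega
  · intro h
    refine mem_image.2 ⟨_, hcell, ?_⟩
    ext ⟨y, u⟩
    rw [mem_singleton, mem_tileOf, hl]
    constructor
    · rintro ⟨-, h1, h2⟩
      rcases h2 with h2 | h2
      · simp only at h2
        subst h2
        simp only [layer, Prod.mk.injEq, true_and] at h1 ⊢
        omega
      · have := h2 w (by simp only; omega) hp
        omega
    · intro e
      rw [e]
      exact ⟨hcell, hl, Or.inl rfl⟩

lemma toTiling_injective (hZ : ∀ i : Fin (2 * n), Z.step i = decide ((i : ℕ) % 2 = 0)) :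
    Function.Injective (toTiling hZ) := by
  have key : ∀ M N : MarkedPath n, M.toTiling hZ = N.toTiling hZ → ∀ x : ℤ, -n ≤ x → x ≤ n →
      (x + n) % 2 = 1 → M.mark x ≤ N.mark x := by
    intro M N h x hx hx' hp
    by_contra! hlt
    have hN := N.mark_nonneg x
    have hMN : M.path = N.path := congrArg DyckTiling.upper h
    have hM : (x, 2 * N.mark x + 1) ∈ skewCells Z M.path := by
      have := mem_skewCells_of_lt_mark hZ M (m := 2 * N.mark x) (w := x) (y := x) (by omega)
        (by omega) hx hx' hp (by omega) (by omega) (by omega)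
      rwa [hp] at this
    have h1 := (singleton_mem_toTiling_iff hZ N hp (hMN ▸ hM)).2 le_rfl
    rw [← h, singleton_mem_toTiling_iff hZ M hp hM] at h1
    omega
  intro M N h
  exact ext_mark (congrArg DyckTiling.upper h) fun x hx hx' hp =>
    le_antisymm (key M N h x hx hx' hp) (key N M h.symm x hx hx' hp)

end MarkedPath

/-! ### From tilings to marked paths -/

lemma IsDyckTile.exists_mem_iff {t : Finset (ℤ × ℤ)} (ht : IsDyckTile t) :
    ∃ (a b : ℤ) (f : ℤ → ℤ), a ≤ b ∧
      (∀ x : ℤ, a ≤ x → x < b → f (x + 1) = f x + 1 ∨ f (x + 1) = f x - 1) ∧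
      f b = f a ∧ (∀ x : ℤ, a ≤ x → x ≤ b → f a ≤ f x) ∧
      ∀ x z : ℤ, (x, z) ∈ t ↔ a ≤ x ∧ x ≤ b ∧ z = f x := by
  obtain ⟨a, b, f, h1, h2, h3, h4, rfl⟩ := ht
  refine ⟨a, b, f, h1, h2, h3, h4, fun x z => ?_⟩
  simp only [mem_image, mem_Icc, Prod.mk.injEq]
  constructor
  · rintro ⟨_, h, rfl, rfl⟩
    exact ⟨h.1, h.2, rfl⟩
  · rintro ⟨h, h', rfl⟩
    exact ⟨x, ⟨h, h'⟩, rfl, rfl⟩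

namespace DyckTiling

variable {n : ℕ}

lemma ext_tiles {S T : DyckTiling n} (hl : S.lower = T.lower) (hu : S.upper = T.upper)
    (ht : S.tiles = T.tiles) : S = T := by
  cases S; cases T; cases hl; cases hu; cases ht; rfl

variable {T : DyckTiling n}

lemma mem_skewCells_of_mem {t : Finset (ℤ × ℤ)} (ht : t ∈ T.tiles) {p : ℤ × ℤ} (hp : p ∈ t) :
    p ∈ skewCells T.lower T.upper :=
  T.cover ▸ mem_biUnion.2 ⟨t, ht, hp⟩

lemma exists_tile {p : ℤ × ℤ} (hp : p ∈ skewCells T.lower T.upper) : ∃ t ∈ T.tiles, p ∈ t := by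
  rw [← T.cover] at hp
  simpa using hp

lemma tile_unique {t u : Finset (ℤ × ℤ)} (ht : t ∈ T.tiles) (hu : u ∈ T.tiles) {p : ℤ × ℤ}
    (hp : p ∈ t) (hp' : p ∈ u) : t = u := by
  by_contra h
  exact Finset.disjoint_left.1 (T.disj t ht u hu h) hp hp'

/-- In a cover-inclusive tiling over the zigzag path, every tile rises by one from a valley
column to an adjacent peak column. -/
lemma tile_rise (hZ : ∀ i : Fin (2 * n), T.lower.step i = decide ((i : ℕ) % 2 = 0))
    (hT : T.CoverInclusive) (k : ℕ) : ∀ (t : Finset (ℤ × ℤ)) (v w z z' : ℤ), t ∈ T.tiles →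
      z < k → (v + n) % 2 = 0 → (w = v + 1 ∨ w = v - 1) → (v, z) ∈ t → (w, z') ∈ t →
      z' = z + 1 := by
  induction k with
  | zero =>
    intro t v w z z' ht hz hv _ hvt _
    have := (mem_skewCells_zigzag hZ _ _ _).1 (mem_skewCells_of_mem ht hvt)
    omega
  | succ k ih =>
    intro t v w z z' ht hz hv hw hvt hwt
    by_contra hne
    have cv := (mem_skewCells_zigzag hZ _ _ _).1 (mem_skewCells_of_mem ht hvt)
    have cw := (mem_skewCells_zigzag hZ _ _ _).1 (mem_skewCells_of_mem ht hwt)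
    obtain ⟨a, b, f, -, hf, -, -, hmem⟩ := (T.isDyck t ht).exists_mem_iff
    have h1 := (hmem v z).1 hvt
    have h2 := (hmem w z').1 hwt
    have hz' : z' = z - 1 := by
      rcases hw with rfl | rfl
      · have := hf v (by omega) (by omega)
        omega
      · have := hf (v - 1) (by omega) (by omega)
        rw [sub_add_cancel] at this
        omega
    obtain ⟨u, hu, hvu⟩ : ∃ u ∈ T.tiles, (v, z - 2) ∈ u :=
      exists_tile ((mem_skewCells_zigzag hZ _ _ _).2 (by omega))
    obtain ⟨y, hy⟩ := hT t ht u hu ⟨_, hvt, _, hvu, rfl, by simp⟩ _ hwt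
    have hy' := ih u v w (z - 2) y hu (by omega) hv hw hvu hy
    obtain rfl : y = z' := by omega
    obtain rfl := tile_unique ht hu hwt hy
    have := (hmem v _).1 hvu
    omega

/-- In a cover-inclusive tiling over the zigzag path, all boxes of a tile have the same
height over that path. -/
lemma layer_eq (hZ : ∀ i : Fin (2 * n), T.lower.step i = decide ((i : ℕ) % 2 = 0))
    (hT : T.CoverInclusive) {t : Finset (ℤ × ℤ)} (ht : t ∈ T.tiles) {p q : ℤ × ℤ} (hp : p ∈ t)
    (hq : q ∈ t) : layer n p = layer n q := by
  obtain ⟨a, b, f, -, -, -, -, hmem⟩ := (T.isDyck t ht).exists_mem_iff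
  have key : ∀ x, a ≤ x → x ≤ b → layer n (x, f x) = layer n (a, f a) := by
    intro x hx
    induction x, hx using Int.leInduction with
    | base => exact fun _ => rfl
    | succ x hx ih =>
      intro hxb
      rw [← ih (by omega)]
      have h1 := (hmem x (f x)).2 ⟨hx, by omega, rfl⟩
      have h2 := (hmem (x + 1) (f (x + 1))).2 ⟨by omega, hxb, rfl⟩
      simp only [layer]
      by_cases hv : (x + n) % 2 = 0
      · have := tile_rise hZ hT ((f x).toNat + 1) t x (x + 1) _ _ ht (by omega) hv (Or.inl rfl) h1 h2
        omega
      · have := tile_rise hZ hT ((f (x + 1)).toNat + 1) t (x + 1) x _ _ ht (by omega) (by omega)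
          (by omega) h2 h1
        omega
  obtain ⟨x, z⟩ := p
  obtain ⟨y, u⟩ := q
  obtain ⟨h1, h2, rfl⟩ := (hmem x z).1 hp
  obtain ⟨h3, h4, rfl⟩ := (hmem y u).1 hq
  rw [key x h1 h2, key y h3 h4]

/-- A tile with more than one box that meets a peak column contains both neighbouring
boxes. -/
lemma neighbours_mem (hZ : ∀ i : Fin (2 * n), T.lower.step i = decide ((i : ℕ) % 2 = 0))
    (hT : T.CoverInclusive) {t : Finset (ℤ × ℤ)} (ht : t ∈ T.tiles) {w m : ℤ}
    (hp : (w + n) % 2 = 1) (hw : (w, m + 1) ∈ t) (hne : t ≠ {(w, m + 1)}) {y : ℤ}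
    (hy : w - 1 ≤ y) (hy' : y ≤ w + 1) : (y, m + (y + n) % 2) ∈ t := by
  have hl : ∀ q ∈ t, layer n q = m := fun q hq => by
    rw [layer_eq hZ hT ht hq hw]
    simp only [layer]
    omega
  obtain ⟨a, b, f, hab, -, hba, hlow, hmem⟩ := (T.isDyck t ht).exists_mem_iff
  have hf : ∀ x, a ≤ x → x ≤ b → f x = m + (x + n) % 2 := by
    intro x hx hx'
    have := hl _ ((hmem x (f x)).2 ⟨hx, hx', rfl⟩)
    simp only [layer] at this
    omega
  obtain ⟨h1, h2, -⟩ := (hmem _ _).1 hw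
  have hlt : a < b := by
    refine lt_of_le_of_ne hab fun e => hne ?_
    ext ⟨x, z⟩
    rw [hmem, mem_singleton, Prod.mk.injEq]
    constructor
    · rintro ⟨h3, h4, rfl⟩
      have := hf x h3 h4
      obtain rfl : x = w := by omega
      omega
    · rintro ⟨rfl, rfl⟩
      exact (hmem _ _).1 hw
  have ha := hf a le_rfl hab
  have ha' := hf (a + 1) (by omega) (by omega)
  have ha'' := hlow (a + 1) (by omega) (by omega)
  have hb := hf b hab le_rfl
  refine (hmem _ _).2 ⟨?_, ?_, ?_⟩
  · have : a ≠ w := by rintro rfl; omega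
    omega
  · have : b ≠ w := by rintro rfl; omega
    omega
  · refine (hf y ?_ ?_).symm
    · have : a ≠ w := by rintro rfl; omega
      omega
    · have : b ≠ w := by rintro rfl; omega
      omega

/-- In a peak column of a cover-inclusive tiling over the zigzag path, the one-box tiles
lie above all other tiles. -/
lemma singleton_mem_of_le (hZ : ∀ i : Fin (2 * n), T.lower.step i = decide ((i : ℕ) % 2 = 0))
    (hT : T.CoverInclusive) {w z z' : ℤ} (h : {(w, z)} ∈ T.tiles) (hz : z ≤ z')
    (hc : (w, z') ∈ skewCells T.lower T.upper) : {(w, z')} ∈ T.tiles := by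
  rcases hz.eq_or_lt with rfl | hlt
  · exact h
  obtain ⟨t, ht, hwt⟩ := exists_tile hc
  suffices t = {(w, z')} from this ▸ ht
  ext q
  rw [mem_singleton]
  refine ⟨fun hq => ?_, fun e => e ▸ hwt⟩
  obtain ⟨y, hy⟩ := hT t ht _ h ⟨_, hwt, _, mem_singleton_self _, rfl, hlt⟩ q hq
  have hq1 : q.1 = w := by simpa using (congrArg Prod.fst (mem_singleton.1 hy))
  have := layer_eq hZ hT ht hq hwt
  simp only [layer, hq1] at this
  exact Prod.ext hq1 (by simp only; omega)

lemma exists_mark (hZ : ∀ i : Fin (2 * n), T.lower.step i = decide ((i : ℕ) % 2 = 0))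
    (hT : T.CoverInclusive) (w : ℤ) : ∃ c : ℤ, 0 ≤ c ∧
      (¬(-n ≤ w ∧ w ≤ n ∧ (w + n) % 2 = 1) → c = 0) ∧
      ((-n ≤ w ∧ w ≤ n ∧ (w + n) % 2 = 1) → 2 * c + 1 ≤ T.upper.ht w ∧
        ∀ m : ℤ, (w, m + 1) ∈ skewCells T.lower T.upper →
          ({(w, m + 1)} ∈ T.tiles ↔ 2 * c ≤ m)) := by
  classical
  by_cases hw : -n ≤ w ∧ w ≤ n ∧ (w + n) % 2 = 1
  swap
  · exact ⟨0, le_rfl, fun _ => rfl, fun h => absurd h hw⟩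
  have hex : ∃ k : ℕ, T.upper.ht w < 2 * (k : ℤ) + 3 ∨ {(w, 2 * (k : ℤ) + 1)} ∈ T.tiles :=
    ⟨(T.upper.ht w).toNat, Or.inl (by omega)⟩
  have hpar := T.upper.ht_parity w hw.1 hw.2.1
  have hnn := T.upper.ht_nonneg w
  refine ⟨Nat.find hex, by omega, fun h => absurd hw h, fun _ => ⟨?_, fun m hm => ?_⟩⟩
  · rcases Nat.eq_zero_or_pos (Nat.find hex) with h0 | h0
    · rw [h0]
      omega
    · have := Nat.find_min hex (m := Nat.find hex - 1) (by omega)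
      push Not at this
      omega
  · have hc := (mem_skewCells_zigzag hZ _ _ _).1 hm
    constructor
    · intro h
      have := Nat.find_min' hex (m := (m / 2).toNat)
        (Or.inr (by convert h using 3; omega))
      omega
    · intro h
      rcases Nat.find_spec hex with h1 | h1
      · omega
      · exact singleton_mem_of_le hZ hT h1 (by omega) hm

lemma exists_toTiling_eq (hZ : ∀ i : Fin (2 * n), T.lower.step i = decide ((i : ℕ) % 2 = 0))
    (hT : T.CoverInclusive) : ∃ M : MarkedPath n, M.toTiling hZ = T := by
  choose c hc0 hcoff hc using exists_mark hZ hT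
  let M : MarkedPath n :=
    { path := T.upper
      mark := c
      mark_off := hcoff
      mark_nonneg := hc0
      mark_le := fun x hx hx' hp => (hc x ⟨hx, hx', hp⟩).1 }
  have hsingle : ∀ {w m : ℤ}, (w + n) % 2 = 1 → (w, m + 1) ∈ skewCells T.lower T.upper →
      ({(w, m + 1)} ∈ T.tiles ↔ 2 * c w ≤ m) := by
    intro w m hp hcell
    have := (mem_skewCells_zigzag hZ _ _ _).1 hcell
    exact (hc w ⟨this.1, this.2.1, hp⟩).2 m hcell
  -- one step along linked columns stays in the same tile
  have hstep : ∀ {t : Finset (ℤ × ℤ)} {m x y : ℤ}, t ∈ T.tiles → 0 ≤ m → m % 2 = 0 →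
      (x, m + (x + n) % 2) ∈ t → (y = x + 1 ∨ y = x - 1) → -n ≤ y → y ≤ n →
      (∀ w, (w = x ∨ w = y) → (w + n) % 2 = 1 → m < 2 * c w) → (y, m + (y + n) % 2) ∈ t := by
    intro t m x y ht hm0 hm2 hx hxy hy hy' hlink
    have hcx := (mem_skewCells_zigzag hZ _ _ _).1 (mem_skewCells_of_mem ht hx)
    obtain ⟨w, hw, hp⟩ : ∃ w, (w = x ∨ w = y) ∧ (w + n) % 2 = 1 := by
      by_cases h : (x + n) % 2 = 1
      · exact ⟨x, Or.inl rfl, h⟩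
      · exact ⟨y, Or.inr rfl, by omega⟩
    have hlt := hlink w hw hp
    have hcell : (w, m + 1) ∈ skewCells T.lower T.upper := by
      have := M.mem_skewCells_of_lt_mark hZ hm0 hm2 (w := w) (y := w) (by omega) (by omega) hp hlt
        (by omega) (by omega)
      rwa [hp] at this
    obtain ⟨s, hs, hws⟩ := exists_tile hcell
    have hne : s ≠ {(w, m + 1)} := by
      intro e
      have := (hsingle hp hcell).1 (e ▸ hs)
      omega
    have hnb : ∀ {v : ℤ}, w - 1 ≤ v → v ≤ w + 1 → (v, m + (v + n) % 2) ∈ s :=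
      fun h h' => neighbours_mem hZ hT hs hp hws hne h h'
    obtain rfl := tile_unique hs ht (hnb (v := x) (by omega) (by omega)) hx
    exact hnb (by omega) (by omega)
  have htile : ∀ t ∈ T.tiles, ∀ p ∈ t, M.tileOf T.lower p = t := by
    rintro t ht ⟨x, z⟩ hp
    have hcx := (mem_skewCells_zigzag hZ _ _ _).1 (mem_skewCells_of_mem ht hp)
    set m := layer n (x, z) with hm
    have hm' : z = m + (x + n) % 2 := by simp [hm, layer]
    ext ⟨y, u⟩
    rw [MarkedPath.mem_tileOf, ← hm]
    constructor
    · rintro ⟨hy, hly, hlink⟩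
      have hu : u = m + (y + n) % 2 := by simp only [layer] at hly; omega
      have hcy := (mem_skewCells_zigzag hZ _ _ _).1 hy
      rw [hu]
      rw [hm'] at hp
      rcases hlink with h | h
      · simp only at h
        exact h ▸ hp
      simp only at h
      rcases le_total x y with hxy | hxy
      · have : ∀ v, x ≤ v → v ≤ y → (v, m + (v + n) % 2) ∈ t := by
          intro v hv
          induction v, hv using Int.leInduction with
          | base => exact fun _ => hp
          | succ v hv ih =>
            intro hvy
            refine hstep ht (by omega) (by omega) (ih (by omega)) (Or.inl rfl) (by omega)
              (by omega) fun w hw hwp => h w (by omega) hwp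
        exact this y hxy le_rfl
      · have : ∀ v, v ≤ x → y ≤ v → (v, m + (v + n) % 2) ∈ t := by
          intro v hv
          induction v, hv using Int.leInductionDown with
          | base => exact fun _ => hp
          | pred v hv ih =>
            intro hvy
            refine hstep ht (by omega) (by omega) (ih (by omega)) (Or.inr rfl) (by omega)
              (by omega) fun w hw hwp => h w (by omega) hwp
        exact this y hxy le_rfl
    · intro hy
      refine ⟨mem_skewCells_of_mem ht hy, layer_eq hZ hT ht hy hp, ?_⟩
      by_cases hxy : x = y
      · exact Or.inl hxy
      refine Or.inr fun w hw hwp => ?_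
      simp only at hw
      obtain ⟨a, b, f, -, -, -, -, hmem⟩ := (T.isDyck t ht).exists_mem_iff
      have h1 := (hmem _ _).1 hp
      have h2 := (hmem _ _).1 hy
      have hwt : (w, f w) ∈ t := (hmem _ _).2 ⟨by omega, by omega, rfl⟩
      have hfw : f w = m + 1 := by
        have := layer_eq hZ hT ht hwt hp
        rw [← hm] at this
        simp only [layer] at this
        omega
      rw [hfw] at hwt
      by_contra hlt
      have hs := (hsingle hwp (mem_skewCells_of_mem ht hwt)).2 (not_lt.1 hlt)
      have hts := tile_unique ht hs hwt (mem_singleton_self _)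
      rw [hts, mem_singleton, Prod.mk.injEq] at hp hy
      omega
  refine ⟨M, ext_tiles rfl rfl ?_⟩
  change (skewCells T.lower T.upper).image (M.tileOf T.lower) = T.tiles
  ext t
  rw [mem_image]
  constructor
  · rintro ⟨p, hp, rfl⟩
    obtain ⟨t, ht, hpt⟩ := exists_tile hp
    rwa [htile t ht p hpt]
  · intro ht
    obtain ⟨a, b, f, hab, -, -, -, hmem⟩ := (T.isDyck t ht).exists_mem_iff
    have hat : (a, f a) ∈ t := (hmem _ _).2 ⟨le_rfl, hab, rfl⟩
    exact ⟨_, mem_skewCells_of_mem ht hat, htile t ht _ hat⟩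

end DyckTiling

/-! ### Marked paths and Dyck tableaux -/

/-- A Dyck path is raised by surrounding it with an up and a down step. -/
lemma DyckPath.exists_raise {n : ℕ} (P : DyckPath n) :
    ∃ Q : DyckPath (n + 1), ∀ x : ℤ, -n ≤ x → x ≤ n → Q.ht x = P.ht x + 1 := by
  obtain ⟨Q, hQ⟩ := DyckPath.exists_ht_eq (n := n + 1)
    (fun x => if -n ≤ x ∧ x ≤ n then P.ht x + 1 else 0)
    (if_neg (by omega)) (if_neg (by omega))
    (fun x hx hx' => by
      by_cases h1 : x < -n
      · rw [if_pos (by omega), if_neg (by omega), P.ht_of_le _ (by omega)]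
        omega
      · by_cases h2 : (n : ℤ) ≤ x
        · rw [if_neg (by omega), if_pos (by omega), P.ht_of_ge x h2]
          omega
        · have := P.ht_succ x (by omega) (by omega)
          rw [if_pos (by omega), if_pos (by omega)]
          omega)
    (fun x _ _ => by
      have := P.ht_nonneg x
      split_ifs <;> omega)
  exact ⟨Q, fun x hx hx' => by
    rw [hQ x (by push_cast; omega) (by push_cast; omega), if_pos ⟨hx, hx'⟩]⟩

/-- A Dyck path touching the axis only at its ends is a raised path. -/
lemma DyckPath.exists_lower {n : ℕ} (Q : DyckPath (n + 1))
    (hQ : ∀ x : ℤ, -n ≤ x → x ≤ n → 1 ≤ Q.ht x) :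
    ∃ P : DyckPath n, ∀ x : ℤ, -n ≤ x → x ≤ n → Q.ht x = P.ht x + 1 := by
  have hl := Q.ht_of_le (-n - 1) (by push_cast; omega)
  have hl' := Q.ht_succ (-n - 1) (by push_cast; omega) (by push_cast; omega)
  rw [sub_add_cancel] at hl'
  have hr := Q.ht_of_ge (n + 1) (by push_cast; omega)
  have hr' := Q.ht_succ n (by push_cast; omega) (by push_cast; omega)
  have h1 := hQ (-n) (by omega) (by omega)
  have h2 := hQ n (by omega) (by omega)
  obtain ⟨P, hP⟩ := DyckPath.exists_ht_eq (n := n) (fun x => Q.ht x - 1)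
    (by omega) (by omega)
    (fun x hx hx' => by
      have := Q.ht_succ x (by push_cast; omega) (by push_cast; omega)
      omega)
    (fun x hx hx' => by
      have := hQ x hx hx'
      omega)
  exact ⟨P, fun x hx hx' => by rw [hP x hx hx']; ring⟩

/-- The peak columns of the zigzag path of order `n`. -/
def peakCols (n : ℕ) : Finset ℤ := (Icc (-(n : ℤ)) n).filter fun x => (x + n) % 2 = 1

lemma mem_peakCols {n : ℕ} {x : ℤ} :
    x ∈ peakCols n ↔ -n ≤ x ∧ x ≤ n ∧ (x + n) % 2 = 1 := by
  simp [peakCols, and_assoc]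

lemma card_peakCols (n : ℕ) : (peakCols n).card = n := by
  have : peakCols n = (range n).image fun k : ℕ => 2 * (k : ℤ) + 1 - n := by
    ext x
    rw [mem_peakCols, mem_image]
    constructor
    · intro h
      exact ⟨((x + n) / 2).toNat, mem_range.2 (by omega), by omega⟩
    · rintro ⟨k, hk, rfl⟩
      have := mem_range.1 hk
      omega
  rw [this, card_image_of_injective _ (fun a b h => by omega), card_range]

lemma card_image_graph (n : ℕ) (g : ℤ → ℤ) :
    ((peakCols n).image fun x => (x, g x)).card = n := by
  rw [card_image_of_injective _ (fun a b h => congrArg Prod.fst h), card_peakCols]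

/-- The valleys of the zigzag path of order `n + 1` lie in the peak columns of the zigzag
path of order `n`. -/
lemma mem_peakCols_iff_valley {n : ℕ} {Z : DyckPath (n + 1)}
    (hZ : ∀ i : Fin (2 * (n + 1)), Z.step i = decide ((i : ℕ) % 2 = 0)) {x : ℤ} :
    x ∈ peakCols n ↔ Z.ht (x - 1) = Z.ht x + 1 ∧ Z.ht (x + 1) = Z.ht x + 1 := by
  have hz := DyckPath.ht_zigzag hZ
  push_cast at hz
  rw [mem_peakCols]
  constructor
  · intro h
    rw [hz x (by omega) (by omega), hz (x - 1) (by omega) (by omega),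
      hz (x + 1) (by omega) (by omega)]
    omega
  · rintro ⟨h1, h2⟩
    by_cases ha : x < -n
    · rw [Z.ht_of_le x (by push_cast; omega), Z.ht_of_le (x - 1) (by push_cast; omega)] at h1
      omega
    by_cases hb : n < x
    · rw [Z.ht_of_ge x (by push_cast; omega), Z.ht_of_ge (x + 1) (by push_cast; omega)] at h2
      omega
    rw [hz x (by omega) (by omega), hz (x - 1) (by omega) (by omega)] at h1
    omega

lemma DyckTableau.ext_dots {n : ℕ} {Z : DyckPath (n + 1)} {D E : DyckTableau n Z}
    (hu : D.upper = E.upper) (hd : D.dots = E.dots) : D = E := by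
  cases D; cases E; cases hu; cases hd; rfl

namespace MarkedPath

variable {n : ℕ} {Z : DyckPath (n + 1)}

/-- The Dyck tableau encoded by a marked path: the raised path, with a dot in each valley
column at the height given by the mark. -/
def toTableau (hZ : ∀ i : Fin (2 * (n + 1)), Z.step i = decide ((i : ℕ) % 2 = 0))
    (M : MarkedPath n) : DyckTableau n Z where
  upper := M.path.exists_raise.choose
  below x := by
    set Q := M.path.exists_raise.choose
    have := Q.ht_nonneg x
    rcases le_or_gt x (-(n + 1 : ℕ)) with h | h
    · rwa [Z.ht_of_le x h]
    rcases le_or_gt ((n + 1 : ℕ) : ℤ) x with h' | h'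
    · rwa [Z.ht_of_ge x h']
    have := Q.ht_parity x h.le h'.le
    rw [DyckPath.ht_zigzag hZ x h.le h'.le]
    omega
  dots := (peakCols n).image fun x => (x, 2 * M.mark x)
  sub := by
    intro p hp
    obtain ⟨x, hx, rfl⟩ := mem_image.1 hp
    obtain ⟨h1, h2, h3⟩ := mem_peakCols.1 hx
    have := M.mark_nonneg x
    have := M.mark_le x h1 h2 h3
    rw [mem_skewCells_zigzag hZ, M.path.exists_raise.choose_spec x h1 h2]
    push_cast
    omega
  card_dots := card_image_graph n _
  valley x h1 h2 := by
    rw [card_eq_one]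
    refine ⟨(x, 2 * M.mark x), ?_⟩
    ext ⟨y, z⟩
    simp only [mem_filter, mem_image, mem_singleton, Prod.mk.injEq]
    constructor
    · rintro ⟨⟨_, -, rfl, rfl⟩, rfl⟩
      exact ⟨rfl, rfl⟩
    · rintro ⟨rfl, rfl⟩
      exact ⟨⟨y, (mem_peakCols_iff_valley hZ).2 ⟨h1, h2⟩, rfl, rfl⟩, rfl⟩

lemma toTableau_bijective (hZ : ∀ i : Fin (2 * (n + 1)), Z.step i = decide ((i : ℕ) % 2 = 0)) :
    Function.Bijective (toTableau hZ) := by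
  constructor
  · intro M N h
    refine ext_mark (DyckPath.ext_ht fun x hx hx' => ?_) fun x hx hx' hp => ?_
    · have h1 := M.path.exists_raise.choose_spec x hx hx'
      have h2 := N.path.exists_raise.choose_spec x hx hx'
      have h3 : M.path.exists_raise.choose = N.path.exists_raise.choose :=
        congrArg DyckTableau.upper h
      rw [h3] at h1
      omega
    · have h1 : (x, 2 * M.mark x) ∈ (M.toTableau hZ).dots :=
        mem_image.2 ⟨x, mem_peakCols.2 ⟨hx, hx', hp⟩, rfl⟩
      rw [h] at h1
      obtain ⟨y, -, hy⟩ := mem_image.1 h1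
      obtain ⟨rfl, hy⟩ := Prod.mk.inj hy
      omega
  · intro D
    have hdot : ∀ x, ∃ z, x ∈ peakCols n → (x, z) ∈ D.dots := by
      intro x
      by_cases hx : x ∈ peakCols n
      swap
      · exact ⟨0, fun h => absurd h hx⟩
      have hv := (mem_peakCols_iff_valley hZ).1 hx
      obtain ⟨⟨y, z⟩, hy⟩ := card_pos.1 (zero_lt_one.trans_eq (D.valley x hv.1 hv.2).symm)
      obtain ⟨h1, rfl⟩ := mem_filter.1 hy
      exact ⟨z, fun _ => h1⟩
    choose g hg using hdot
    have hcell : ∀ x ∈ peakCols n, 0 ≤ g x ∧ g x + 2 ≤ D.upper.ht x ∧ g x % 2 = 0 := by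
      intro x hx
      have h1 := (mem_skewCells_zigzag hZ _ _ _).1 (D.sub (hg x hx))
      have h2 := mem_peakCols.1 hx
      push_cast at h1
      omega
    obtain ⟨P, hP⟩ := D.upper.exists_lower (fun x hx hx' => by
      have h1 := D.upper.ht_nonneg x
      have h2 := D.upper.ht_parity x (by push_cast; omega) (by push_cast; omega)
      push_cast at h2
      by_cases hp : (x + n) % 2 = 1
      · have := hcell x (mem_peakCols.2 ⟨hx, hx', hp⟩)
        omega
      · omega)
    let M : MarkedPath n :=
      { path := P
        mark := fun x => if x ∈ peakCols n then g x / 2 else 0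
        mark_off := fun x hx => if_neg fun h => hx (mem_peakCols.1 h)
        mark_nonneg := fun x => by
          split_ifs with h
          · have := hcell x h
            omega
          · exact le_rfl
        mark_le := fun x hx hx' hp => by
          have hmem := mem_peakCols.2 ⟨hx, hx', hp⟩
          have := hcell x hmem
          have := hP x hx hx'
          rw [if_pos hmem]
          omega }
    refine ⟨M, DyckTableau.ext_dots (DyckPath.ext_ht fun x hx hx' => ?_) ?_⟩
    · change M.path.exists_raise.choose.ht x = _
      by_cases h : -n ≤ x ∧ x ≤ n
      · rw [M.path.exists_raise.choose_spec x h.1 h.2, hP x h.1 h.2]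
      · push_cast at hx hx'
        rcases le_or_gt x 0 with h0 | h0
        · rw [DyckPath.ht_of_le _ x (by push_cast; omega),
            DyckPath.ht_of_le _ x (by push_cast; omega)]
        · rw [DyckPath.ht_of_ge _ x (by push_cast; omega),
            DyckPath.ht_of_ge _ x (by push_cast; omega)]
    · refine eq_of_subset_of_card_le ?_ ?_
      · intro p hp
        obtain ⟨x, hx, rfl⟩ := mem_image.1 hp
        have := hcell x hx
        have e : 2 * M.mark x = g x := by
          change 2 * (if x ∈ peakCols n then g x / 2 else 0) = g x
          rw [if_pos hx]
          omega
        rw [e]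
        exact hg x hx
      · rw [D.card_dots, (M.toTableau hZ).card_dots]

end MarkedPath

/-- There is a bijection between the cover-inclusive Dyck tilings
with lower path the zigzag path `(UD)^n` and the Dyck tableaux of order `n`. -/
theorem tilings_equiv_dyck_tableaux (n : ℕ) (Zn : DyckPath n) (Zn1 : DyckPath (n + 1))
    (hZn : ∀ i : Fin (2 * n), Zn.step i = decide ((i : ℕ) % 2 = 0))
    (hZn1 : ∀ i : Fin (2 * (n + 1)), Zn1.step i = decide ((i : ℕ) % 2 = 0)) :
    Nonempty ({T : DyckTiling n // T.CoverInclusive ∧ T.lower = Zn} ≃ DyckTableau n Zn1) := by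
  let F : MarkedPath n → {T : DyckTiling n // T.CoverInclusive ∧ T.lower = Zn} :=
    fun M => ⟨M.toTiling hZn, M.toTiling_coverInclusive hZn, rfl⟩
  have hF : Function.Bijective F := by
    constructor
    · intro M N h
      exact MarkedPath.toTiling_injective hZn (congrArg Subtype.val h)
    · rintro ⟨T, hT, rfl⟩
      obtain ⟨M, hM⟩ := DyckTiling.exists_toTiling_eq hZn hT
      exact ⟨M, Subtype.ext hM⟩
  exact ⟨(Equiv.ofBijective F hF).symm.trans
    (Equiv.ofBijective _ (MarkedPath.toTableau_bijective hZn1))⟩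

end
end
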